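/- Let 0 < p ≤ 1 and let f be a smooth nonnegative function on ℝⁿ × (0,1] satisfying ∂ₜ f ≤ Δ f pointwise, with f(·,t) → 0 in L²_loc(ℝⁿ) as t → 0⁺. If there is a constant C such that the Lᵖ norm of f over B(0,r) × [0,1] satisfies ‖f‖_{Lᵖ(B(0,r)×[0,1])} ≤ e^{C r} for every r > 0, then f ≡ 0 on ℝⁿ × (0,1]. -/

import Mathlib

open MeasureTheory Filter Set Metric

/-- The Euclidean Laplacian of `g : ℝⁿ → ℝ`. -/
noncomputable def heatLap {n : ℕ} (g : EuclideanSpace ℝ (Fin n) → ℝ)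
    (x : EuclideanSpace ℝ (Fin n)) : ℝ :=
  ∑ i : Fin n, fderiv ℝ (fun y => fderiv ℝ g y (EuclideanSpace.single i (1 : ℝ))) x
    (EuclideanSpace.single i (1 : ℝ))

/-! Testing the subsolution against a cut-off backward heat kernel gives an `L¹` mean value
inequality on cylinders: the Gaussian is annihilated by the backward heat operator, so only the
derivatives of the cutoff contribute, and these live at distance comparable to `R` from the centre,
which produces a factor `e^{-R²/(128T)}`. Comparing `f^p` with its supremum, weighted by a power of
the distance to the boundary of the ball, absorbs `sup f^(1-p)` and turns `L¹` into `Lᵖ`. The growth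
hypothesis then yields `f ≤ A e^{b|x|²}`, and on a time interval of length at most a constant times
`1/b` the Gaussian factor beats this bound as `R → ∞`. So `f` vanishes for a short time depending
only on `b`, and one iterates in time. -/

local notation "𝔼" n:max => EuclideanSpace ℝ (Fin n)

section DirectionalDerivative

variable {E : Type*} [NormedAddCommGroup E] [NormedSpace ℝ E] {g h : E → ℝ}

theorem contDiff_one_fderiv_apply (hg : ContDiff ℝ 2 g) (v : E) :
    ContDiff ℝ 1 fun y => fderiv ℝ g y v :=
  (hg.fderiv_right (by norm_num)).clm_apply contDiff_const

theorem continuous_fderiv_apply (hg : ContDiff ℝ 1 g) (v : E) :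
    Continuous fun y => fderiv ℝ g y v :=
  (hg.continuous_fderiv one_ne_zero).clm_apply continuous_const

theorem integral_fderiv_mul_of_hasCompactSupport [FiniteDimensional ℝ E] [MeasurableSpace E]
    [BorelSpace E] (μ : Measure E) [μ.IsAddHaarMeasure] (hg : ContDiff ℝ 1 g)
    (hh : ContDiff ℝ 1 h) (hc : HasCompactSupport h) (v : E) :
    ∫ x, fderiv ℝ g x v * h x ∂μ = -∫ x, g x * fderiv ℝ h x v ∂μ := by
  have hint : ∀ {w k : E → ℝ}, Continuous w → Continuous k → HasCompactSupport k →
      Integrable (fun x => w x * k x) μ := fun hw hk hck =>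
    (hw.mul hk).integrable_of_hasCompactSupport hck.mul_left
  rw [integral_mul_fderiv_eq_neg_fderiv_mul_of_integrable
    (hint (continuous_fderiv_apply hg v) hh.continuous hc)
    (hint hg.continuous (continuous_fderiv_apply hh v) (hc.fderiv_apply (𝕜 := ℝ) v))
    (hint hg.continuous hh.continuous hc) (fun x _ => hg.differentiable one_ne_zero x)
    (fun x _ => hh.differentiable one_ne_zero x), neg_neg]

theorem integral_fderiv_fderiv_mul_comm [FiniteDimensional ℝ E] [MeasurableSpace E] [BorelSpace E]
    (μ : Measure E) [μ.IsAddHaarMeasure] (hg : ContDiff ℝ 2 g) (hh : ContDiff ℝ 2 h)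
    (hc : HasCompactSupport h) (v : E) :
    ∫ x, fderiv ℝ (fun y => fderiv ℝ g y v) x v * h x ∂μ
      = ∫ x, g x * fderiv ℝ (fun y => fderiv ℝ h y v) x v ∂μ := by
  rw [integral_fderiv_mul_of_hasCompactSupport μ (contDiff_one_fderiv_apply hg v)
      (hh.of_le one_le_two) hc,
    integral_fderiv_mul_of_hasCompactSupport μ (hg.of_le one_le_two)
      (contDiff_one_fderiv_apply hh v) (hc.fderiv_apply (𝕜 := ℝ) v), neg_neg]

theorem fderiv_fderiv_mul (hg : ContDiff ℝ 2 g) (hh : ContDiff ℝ 2 h) (x v : E) :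
    fderiv ℝ (fun y => fderiv ℝ (fun z => g z * h z) y v) x v
      = fderiv ℝ (fun y => fderiv ℝ g y v) x v * h x + 2 * (fderiv ℝ g x v * fderiv ℝ h x v)
        + g x * fderiv ℝ (fun y => fderiv ℝ h y v) x v := by
  have hg₀ : Differentiable ℝ g := hg.differentiable two_ne_zero
  have hh₀ : Differentiable ℝ h := hh.differentiable two_ne_zero
  have hg₁ := (contDiff_one_fderiv_apply hg v).differentiable one_ne_zero
  have hh₁ := (contDiff_one_fderiv_apply hh v).differentiable one_ne_zero
  have hfirst : (fun y => fderiv ℝ (fun z => g z * h z) y v)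
      = fun y => g y * fderiv ℝ h y v + h y * fderiv ℝ g y v := by
    ext y
    rw [fderiv_fun_mul (hg₀ y) (hh₀ y)]
    rfl
  rw [hfirst, fderiv_fun_add ((hg₀ x).fun_mul (hh₁ x)) ((hh₀ x).fun_mul (hg₁ x)),
    fderiv_fun_mul (hg₀ x) (hh₁ x), fderiv_fun_mul (hh₀ x) (hg₁ x)]
  simp only [add_apply, smul_apply, smul_eq_mul]
  ring

theorem fderiv_comp_smul_sub (hg : Differentiable ℝ g) (x₀ : E) (c : ℝ) (x v : E) :
    fderiv ℝ (fun y => g (c • (y - x₀))) x v = c * fderiv ℝ g (c • (x - x₀)) v := by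
  have hinner : HasFDerivAt (fun y => c • (y - x₀)) (c • ContinuousLinearMap.id ℝ E) x :=
    ((hasFDerivAt_id x).sub_const x₀).const_smul c
  have hcomp : fderiv ℝ (fun y => g (c • (y - x₀))) x = _ :=
    ((hg (c • (x - x₀))).hasFDerivAt.comp x hinner).fderiv
  simp [hcomp]

end DirectionalDerivative

section Laplacian

variable {n : ℕ} {g h : 𝔼 n → ℝ}

theorem continuous_heatLap (hg : ContDiff ℝ 2 g) : Continuous (heatLap g) :=
  continuous_finsetSum _ fun _ _ => continuous_fderiv_apply (contDiff_one_fderiv_apply hg _) _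

theorem heatLap_eq_zero_of_eventuallyEq_const {c : ℝ} {x : 𝔼 n} (hg : g =ᶠ[nhds x] fun _ => c) :
    heatLap g x = 0 := by
  refine Finset.sum_eq_zero fun i _ => ?_
  have hfirst :
      (fun y => fderiv ℝ g y (EuclideanSpace.single i (1 : ℝ))) =ᶠ[nhds x] fun _ => 0 := by
    filter_upwards [hg.fderiv (𝕜 := ℝ)] with y hy
    simp [hy]
  simp [hfirst.fderiv_eq]

theorem hasCompactSupport_heatLap (hc : HasCompactSupport g) : HasCompactSupport (heatLap g) :=
  HasCompactSupport.intro hc fun _ hx =>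
    heatLap_eq_zero_of_eventuallyEq_const (notMem_tsupport_iff_eventuallyEq.1 hx)

theorem integral_heatLap_mul_comm (hg : ContDiff ℝ 2 g) (hh : ContDiff ℝ 2 h)
    (hc : HasCompactSupport h) : ∫ x, heatLap g x * h x = ∫ x, g x * heatLap h x := by
  simp only [heatLap, Finset.sum_mul, Finset.mul_sum]
  rw [integral_finsetSum, integral_finsetSum]
  · exact Finset.sum_congr rfl fun i _ => integral_fderiv_fderiv_mul_comm volume hg hh hc _
  · exact fun i _ => (hg.continuous.mul (continuous_fderiv_apply
      (contDiff_one_fderiv_apply hh _) _)).integrable_of_hasCompactSupport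
      ((hc.fderiv_apply (𝕜 := ℝ) _).fderiv_apply (𝕜 := ℝ) _).mul_left
  · exact fun i _ => ((continuous_fderiv_apply (contDiff_one_fderiv_apply hg _) _).mul
      hh.continuous).integrable_of_hasCompactSupport hc.mul_left

theorem heatLap_mul (hg : ContDiff ℝ 2 g) (hh : ContDiff ℝ 2 h) (x : 𝔼 n) :
    heatLap (fun y => g y * h y) x = heatLap g x * h x
      + 2 * (∑ i : Fin n, fderiv ℝ g x (EuclideanSpace.single i (1 : ℝ)) *
          fderiv ℝ h x (EuclideanSpace.single i (1 : ℝ))) + g x * heatLap h x := by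
  simp only [heatLap, Finset.sum_mul, Finset.mul_sum, ← Finset.sum_add_distrib,
    fderiv_fderiv_mul hg hh]

theorem heatLap_comp_smul_sub (hg : ContDiff ℝ 2 g) (x₀ : 𝔼 n) (c : ℝ) (x : 𝔼 n) :
    heatLap (fun y => g (c • (y - x₀))) x = c ^ 2 * heatLap g (c • (x - x₀)) := by
  simp only [heatLap, Finset.mul_sum]
  refine Finset.sum_congr rfl fun i _ => ?_
  set v := EuclideanSpace.single i (1 : ℝ)
  have hg₁ := (contDiff_one_fderiv_apply hg v).differentiable one_ne_zero
  have hg₁' : DifferentiableAt ℝ (fun y => fderiv ℝ g (c • (y - x₀)) v) x :=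
    (hg₁ _).comp x ((differentiableAt_id.sub_const x₀).const_smul c)
  simp only [fderiv_comp_smul_sub (hg.differentiable two_ne_zero)]
  rw [fderiv_const_mul hg₁', smul_apply, smul_eq_mul, fderiv_comp_smul_sub hg₁]
  ring

end Laplacian

section SpaceTime

variable {E : Type*} [NormedAddCommGroup E] [NormedSpace ℝ E] {I : Set ℝ} {u : ℝ → E → ℝ}

theorem contDiff_of_contDiffOn_uncurry {k : WithTop ℕ∞}
    (hu : ContDiffOn ℝ k (Function.uncurry u) (I ×ˢ univ)) {t : ℝ} (ht : t ∈ I) :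
    ContDiff ℝ k (u t) :=
  contDiffOn_univ.1 <| hu.comp (f := fun y => (t, y)) (contDiff_prodMk_right t).contDiffOn
    fun y _ => ⟨ht, mem_univ y⟩

theorem hasDerivAt_of_contDiffOn_uncurry (hI : IsOpen I)
    (hu : ContDiffOn ℝ 1 (Function.uncurry u) (I ×ˢ univ)) {t : ℝ} (ht : t ∈ I) (x : E) :
    HasDerivAt (fun s => u s x) (fderiv ℝ (Function.uncurry u) (t, x) (1, 0)) t := by
  have hut : DifferentiableAt ℝ (Function.uncurry u) (t, x) :=
    (hu.differentiableOn one_ne_zero).differentiableAt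
      ((hI.prod isOpen_univ).mem_nhds ⟨ht, mem_univ x⟩)
  exact hut.hasFDerivAt.comp_hasDerivAt t ((hasDerivAt_id t).prodMk (hasDerivAt_const t x))

theorem continuousOn_deriv_of_contDiffOn_uncurry (hI : IsOpen I)
    (hu : ContDiffOn ℝ 1 (Function.uncurry u) (I ×ˢ univ)) :
    ContinuousOn (Function.uncurry fun t x => deriv (fun s => u s x) t) (I ×ˢ univ) :=
  ((hu.continuousOn_fderiv_of_isOpen (hI.prod isOpen_univ) le_rfl).clm_apply
    continuousOn_const).congr fun q hq => (hasDerivAt_of_contDiffOn_uncurry hI hu hq.1 q.2).deriv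

theorem continuous_deriv_of_contDiffOn_uncurry (hI : IsOpen I)
    (hu : ContDiffOn ℝ 1 (Function.uncurry u) (I ×ˢ univ)) {t : ℝ} (ht : t ∈ I) :
    Continuous fun x => deriv (fun s => u s x) t :=
  continuousOn_univ.1 <| (continuousOn_deriv_of_contDiffOn_uncurry hI hu).comp
    (f := fun x => (t, x)) (by fun_prop) fun x _ => ⟨ht, mem_univ x⟩

end SpaceTime

section IntegralOverCompact

variable {E : Type*} [MeasurableSpace E] {I : Set ℝ} {Q : Set E} {a b : ℝ}

theorem integrable_prod_restrict_of_continuousOn [TopologicalSpace E] [T2Space E] [BorelSpace E]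
    (μ : Measure E) [IsFiniteMeasureOnCompacts μ] [SFinite μ] {w : ℝ × E → ℝ}
    (hw : ContinuousOn w (I ×ˢ univ)) (hQ : IsCompact Q) (hab : Icc a b ⊆ I) :
    Integrable w ((volume.restrict (Ioc a b)).prod (μ.restrict Q)) := by
  rw [Measure.prod_restrict]
  exact ((hw.mono (prod_mono hab (subset_univ _))).integrableOn_compact
    (isCompact_Icc.prod hQ)).mono_set (prod_mono Ioc_subset_Icc_self subset_rfl)

theorem intervalIntegrable_setIntegral_of_continuousOn [TopologicalSpace E] [T2Space E]
    [BorelSpace E] (μ : Measure E) [IsFiniteMeasureOnCompacts μ] [SFinite μ] {w : ℝ → E → ℝ}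
    (hw : ContinuousOn (Function.uncurry w) (I ×ˢ univ)) (hQ : IsCompact Q) (hab : a ≤ b)
    (hI : Icc a b ⊆ I) :
    IntervalIntegrable (fun t => ∫ x in Q, w t x ∂μ) volume a b :=
  (intervalIntegrable_iff_integrableOn_Ioc_of_le hab).2
    (integrable_prod_restrict_of_continuousOn μ hw hQ hI).integral_prod_left

theorem setIntegral_sub_setIntegral_eq_intervalIntegral_deriv [NormedAddCommGroup E]
    [NormedSpace ℝ E] [BorelSpace E] (μ : Measure E) [IsFiniteMeasureOnCompacts μ] [SFinite μ]
    {u : ℝ → E → ℝ} (hI : IsOpen I) (hu : ContDiffOn ℝ 1 (Function.uncurry u) (I ×ˢ univ))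
    (hQ : IsCompact Q) (hab : a ≤ b) (habI : Icc a b ⊆ I) :
    (∫ x in Q, u b x ∂μ) - ∫ x in Q, u a x ∂μ
      = ∫ t in a..b, ∫ x in Q, deriv (fun s => u s x) t ∂μ := by
  have hslice : ∀ t ∈ Icc a b, IntegrableOn (u t) Q μ := fun t ht =>
    (contDiff_of_contDiffOn_uncurry hu (habI ht)).continuous.continuousOn.integrableOn_compact hQ
  have hderiv := continuousOn_deriv_of_contDiffOn_uncurry hI hu
  have hftc : ∀ x, u b x - u a x = ∫ t in a..b, deriv (fun s => u s x) t := by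
    intro x
    rw [← uIcc_of_le hab] at habI
    refine (intervalIntegral.integral_deriv_eq_sub (f := fun s => u s x)
      (fun t ht => (hasDerivAt_of_contDiffOn_uncurry hI hu (habI ht) x).differentiableAt) ?_).symm
    exact (hderiv.comp (f := fun t => (t, x)) (by fun_prop)
      fun t ht => ⟨habI ht, mem_univ x⟩).intervalIntegrable
  rw [← integral_sub (hslice b ⟨hab, le_rfl⟩) (hslice a ⟨le_rfl, hab⟩),
    intervalIntegral_integral_swap]
  · simp only [hftc]
  · rw [uIoc_of_le hab]
    exact integrable_prod_restrict_of_continuousOn μ hderiv hQ habI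

end IntegralOverCompact

section Gaussian

variable {n : ℕ}

/-- The heat kernel of `ℝⁿ` centred at `x₀`, without the factor `(4π)^(-n/2)`, which cancels in the
mean value inequality. -/
noncomputable def gaussKernel (x₀ : 𝔼 n) (τ : ℝ) (x : 𝔼 n) : ℝ :=
  τ ^ (-(n / 2 : ℝ)) * Real.exp (-(‖x - x₀‖ ^ 2 / (4 * τ)))

theorem gaussKernel_nonneg (x₀ : 𝔼 n) {τ : ℝ} (hτ : 0 ≤ τ) (x : 𝔼 n) :
    0 ≤ gaussKernel x₀ τ x := by
  unfold gaussKernel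
  positivity

theorem gaussKernel_le (x₀ : 𝔼 n) {τ : ℝ} (hτ : 0 ≤ τ) (x : 𝔼 n) :
    gaussKernel x₀ τ x ≤ τ ^ (-(n / 2 : ℝ)) :=
  mul_le_of_le_one_right (Real.rpow_nonneg hτ _)
    (Real.exp_le_one_iff.2 (neg_nonpos.2 (by positivity)))

theorem contDiffOn_gaussKernel {k : WithTop ℕ∞} (x₀ : 𝔼 n) :
    ContDiffOn ℝ k (Function.uncurry (gaussKernel x₀)) (Ioi 0 ×ˢ univ) := by
  intro q hq
  have hq₀ : q.1 ≠ 0 := ne_of_gt hq.1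
  refine ContDiffAt.contDiffWithinAt (ContDiffAt.mul (contDiffAt_fst.rpow_const_of_ne hq₀)
    (ContDiffAt.exp (ContDiffAt.neg (ContDiffAt.div ?_ ?_ ?_))))
  · exact (contDiffAt_snd.sub contDiffAt_const).norm_sq ℝ
  · exact contDiffAt_const.mul contDiffAt_fst
  · simpa using hq₀

theorem hasDerivAt_gaussKernel (x₀ : 𝔼 n) {τ : ℝ} (hτ : 0 < τ) (x : 𝔼 n) :
    HasDerivAt (fun τ => gaussKernel x₀ τ x)
      ((‖x - x₀‖ ^ 2 / (4 * τ ^ 2) - n / (2 * τ)) * gaussKernel x₀ τ x) τ := by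
  have hpow : HasDerivAt (fun τ : ℝ => τ ^ (-(n / 2 : ℝ)))
      (-(n / 2 : ℝ) * τ ^ (-(n / 2 : ℝ) - 1)) τ :=
    Real.hasDerivAt_rpow_const (Or.inl hτ.ne')
  have hexponent : HasDerivAt (fun τ : ℝ => -(‖x - x₀‖ ^ 2 / (4 * τ)))
      (‖x - x₀‖ ^ 2 / (4 * τ ^ 2)) τ := by
    convert! ((hasDerivAt_inv hτ.ne').const_mul (-(‖x - x₀‖ ^ 2 / 4))) using 1
    · ext s
      ring
    · ring
  convert! hpow.mul hexponent.exp using 1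
  rw [Real.rpow_sub_one hτ.ne']
  unfold gaussKernel
  ring

theorem hasFDerivAt_gaussKernel (x₀ : 𝔼 n) (τ : ℝ) (x : 𝔼 n) :
    HasFDerivAt (gaussKernel x₀ τ) (-(gaussKernel x₀ τ x / (2 * τ)) • innerSL ℝ (x - x₀)) x := by
  have hnorm : HasFDerivAt (fun y : 𝔼 n => ‖y - x₀‖ ^ 2) (2 • innerSL ℝ (x - x₀)) x := by
    simpa using ((hasFDerivAt_id x).sub_const x₀).norm_sq
  have hker : gaussKernel x₀ τ
      = fun y => τ ^ (-(n / 2 : ℝ)) * Real.exp (-(4 * τ)⁻¹ * ‖y - x₀‖ ^ 2) := by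
    ext y
    rw [gaussKernel, neg_mul, inv_mul_eq_div]
  rw [hker]
  convert! ((hnorm.const_mul (-(4 * τ)⁻¹)).exp).const_mul (τ ^ (-(n / 2 : ℝ))) using 1
  ext v
  simp only [smul_apply, smul_eq_mul, nsmul_eq_mul, Nat.cast_ofNat]
  ring

theorem fderiv_gaussKernel_apply (x₀ : 𝔼 n) (τ : ℝ) (x v : 𝔼 n) :
    fderiv ℝ (gaussKernel x₀ τ) x v
      = -(2 * τ)⁻¹ * (gaussKernel x₀ τ x * innerSL ℝ v (x - x₀)) := by
  rw [(hasFDerivAt_gaussKernel x₀ τ x).fderiv, smul_apply, smul_eq_mul, innerSL_apply_apply,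
    innerSL_apply_apply, real_inner_comm]
  ring

theorem fderiv_fderiv_gaussKernel_apply (x₀ : 𝔼 n) (τ : ℝ) (x v : 𝔼 n) :
    fderiv ℝ (fun y => fderiv ℝ (gaussKernel x₀ τ) y v) x v
      = (inner ℝ v (x - x₀) ^ 2 / (4 * τ ^ 2) - ‖v‖ ^ 2 / (2 * τ)) * gaussKernel x₀ τ x := by
  have hinner : HasFDerivAt (fun y => innerSL ℝ v (y - x₀)) (innerSL ℝ v) x :=
    (innerSL ℝ v).hasFDerivAt.comp x ((hasFDerivAt_id x).sub_const x₀)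
  simp only [fderiv_gaussKernel_apply]
  rw [(((hasFDerivAt_gaussKernel x₀ τ x).fun_mul hinner).const_mul (-(2 * τ)⁻¹)).fderiv]
  simp only [add_apply, smul_apply, smul_eq_mul, innerSL_apply_apply,
    real_inner_self_eq_norm_sq, real_inner_comm v (x - x₀)]
  ring

theorem heatLap_gaussKernel (x₀ : 𝔼 n) (τ : ℝ) (x : 𝔼 n) :
    heatLap (gaussKernel x₀ τ) x
      = (‖x - x₀‖ ^ 2 / (4 * τ ^ 2) - n / (2 * τ)) * gaussKernel x₀ τ x := by
  simp only [heatLap, fderiv_fderiv_gaussKernel_apply, ← Finset.sum_mul, Finset.sum_sub_distrib,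
    ← Finset.sum_div, EuclideanSpace.real_norm_sq_eq (x - x₀), EuclideanSpace.inner_single_left,
    PiLp.norm_single, map_one, one_mul, norm_one, one_pow, Finset.sum_const,
    Finset.card_univ, Fintype.card_fin, nsmul_eq_mul, mul_one]

theorem sum_fderiv_mul_fderiv_gaussKernel (g : 𝔼 n → ℝ) (x₀ : 𝔼 n) (τ : ℝ) (x : 𝔼 n) :
    ∑ i : Fin n, fderiv ℝ g x (EuclideanSpace.single i (1 : ℝ)) *
        fderiv ℝ (gaussKernel x₀ τ) x (EuclideanSpace.single i (1 : ℝ))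
      = -(gaussKernel x₀ τ x / (2 * τ)) * fderiv ℝ g x (x - x₀) := by
  have hsum : ∑ i : Fin n, (x - x₀) i • EuclideanSpace.single i (1 : ℝ) = x - x₀ := by
    simpa using (EuclideanSpace.basisFun (Fin n) ℝ).sum_repr (x - x₀)
  conv_rhs => rw [← hsum, map_sum, Finset.mul_sum]
  refine Finset.sum_congr rfl fun i _ => ?_
  rw [fderiv_gaussKernel_apply, innerSL_apply_apply, EuclideanSpace.inner_single_left, map_one,
    one_mul, map_smul, smul_eq_mul]
  ring

theorem rpow_le_mul_exp {m b v : ℝ} (hm : 0 < m) (hb : 0 < b) (hv : 0 ≤ v) :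
    v ^ m ≤ (m / b) ^ m * Real.exp (b * v) := by
  have hlin : v ≤ m / b * Real.exp (b * v / m) := by
    calc v = m / b * (b * v / m) := by field_simp
      _ ≤ m / b * Real.exp (b * v / m) := by
        gcongr
        linarith [Real.add_one_le_exp (b * v / m)]
  calc v ^ m ≤ (m / b * Real.exp (b * v / m)) ^ m := Real.rpow_le_rpow hv hlin hm.le
    _ = (m / b) ^ m * Real.exp (b * v) := by
      rw [Real.mul_rpow (by positivity) (by positivity), ← Real.exp_mul, div_mul_cancel₀ _ hm.ne']

theorem rpow_neg_mul_inv_add_inv_le {R τ : ℝ} (d : ℕ) (hR : 0 < R) (hτ : 0 < τ) :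
    τ ^ (-(d / 2 : ℝ)) * ((R ^ 2)⁻¹ + τ⁻¹)
      ≤ (R ^ (d + 2))⁻¹ * (1 + R ^ 2 / τ) ^ (d / 2 + 1 : ℝ) := by
  set v := R ^ 2 / τ with hv
  have : 0 < v := by positivity
  have hpow : τ ^ (-(d / 2 : ℝ)) = (R ^ d)⁻¹ * v ^ (d / 2 : ℝ) := by
    rw [hv, Real.div_rpow (by positivity) hτ.le, Real.rpow_neg hτ.le, ← Real.rpow_natCast R 2,
      ← Real.rpow_mul hR.le, Nat.cast_ofNat, mul_div_cancel₀ _ (two_ne_zero' ℝ),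
      Real.rpow_natCast]
    field_simp
  calc τ ^ (-(d / 2 : ℝ)) * ((R ^ 2)⁻¹ + τ⁻¹)
      = (R ^ (d + 2))⁻¹ * (v ^ (d / 2 : ℝ) * (1 + v)) := by
        rw [hpow, hv]
        field_simp
        rw [pow_add]
    _ ≤ (R ^ (d + 2))⁻¹ * ((1 + v) ^ (d / 2 : ℝ) * (1 + v)) := by
        gcongr
        linarith
    _ = (R ^ (d + 2))⁻¹ * (1 + v) ^ (d / 2 + 1 : ℝ) := by
        rw [Real.rpow_add_one (by positivity)]

theorem exists_gaussKernel_mul_inv_add_inv_le (n : ℕ) : ∃ K > (0 : ℝ), ∀ {R τ T : ℝ}, 0 < R →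
    0 < τ → τ ≤ T → ∀ {x₀ x : 𝔼 n}, R / 4 ≤ ‖x - x₀‖ →
    gaussKernel x₀ τ x * ((R ^ 2)⁻¹ + τ⁻¹)
      ≤ K * ((R ^ (n + 2))⁻¹ * Real.exp (-(R ^ 2 / (128 * T)))) := by
  set m : ℝ := n / 2 + 1
  refine ⟨(m / (1 / 128)) ^ m * Real.exp (1 / 128), by positivity,
    fun {R τ T} hR hτ hτT {x₀ x} hx => ?_⟩
  set v := R ^ 2 / τ with hv
  have : 0 < T := hτ.trans_le hτT
  have hexp : Real.exp (-(‖x - x₀‖ ^ 2 / (4 * τ)))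
      ≤ Real.exp (-(v / 128)) * Real.exp (-(R ^ 2 / (128 * T))) := by
    rw [← Real.exp_add]
    refine Real.exp_le_exp.2 ?_
    have hnear : (R / 4) ^ 2 / (4 * τ) ≤ ‖x - x₀‖ ^ 2 / (4 * τ) := by gcongr
    have hfar : R ^ 2 / (128 * T) ≤ R ^ 2 / (128 * τ) := by gcongr
    have hsplit : (R / 4) ^ 2 / (4 * τ) = v / 128 + R ^ 2 / (128 * τ) := by
      rw [hv]
      field_simp
      norm_num
    linarith
  calc gaussKernel x₀ τ x * ((R ^ 2)⁻¹ + τ⁻¹)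
      = τ ^ (-(n / 2 : ℝ)) * ((R ^ 2)⁻¹ + τ⁻¹) * Real.exp (-(‖x - x₀‖ ^ 2 / (4 * τ))) := by
        rw [gaussKernel]
        ring
    _ ≤ (R ^ (n + 2))⁻¹ * ((m / (1 / 128)) ^ m * Real.exp (1 / 128 * (1 + v)))
          * (Real.exp (-(v / 128)) * Real.exp (-(R ^ 2 / (128 * T)))) := by
        refine mul_le_mul ((rpow_neg_mul_inv_add_inv_le n hR hτ).trans ?_) hexp (by positivity)
          (by positivity)
        gcongr
        exact rpow_le_mul_exp (by positivity) (by norm_num) (by positivity)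
    _ = (m / (1 / 128)) ^ m * Real.exp (1 / 128)
          * ((R ^ (n + 2))⁻¹ * Real.exp (-(R ^ 2 / (128 * T)))) := by
        rw [show (1 : ℝ) / 128 * (1 + v) = 1 / 128 + v / 128 by ring, Real.exp_add,
          Real.exp_neg (v / 128)]
        field_simp

theorem volume_real_ball_of_pos (x₀ : 𝔼 n) {r : ℝ} (hr : 0 < r) :
    volume.real (ball x₀ r) = r ^ n * volume.real (ball (0 : 𝔼 n) 1) := by
  simp only [measureReal_def]
  rw [Measure.addHaar_ball_of_pos _ _ hr, ENNReal.toReal_mul,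
    ENNReal.toReal_ofReal (by positivity), finrank_euclideanSpace_fin]

theorem le_setIntegral_gaussKernel (x₀ : 𝔼 n) {ε : ℝ} (hε : 0 < ε) :
    Real.exp (-(1 / 4)) * volume.real (ball (0 : 𝔼 n) 1)
      ≤ ∫ x in ball x₀ √ε, gaussKernel x₀ ε x := by
  have hs : 0 < √ε := Real.sqrt_pos.2 hε
  have hpow : ε ^ (-(n / 2 : ℝ)) * √ε ^ n = 1 := by
    rw [Real.sqrt_eq_rpow, ← Real.rpow_natCast, ← Real.rpow_mul hε.le, ← Real.rpow_add hε]
    convert! Real.rpow_zero ε using 2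
    ring
  have hge : ∀ x ∈ ball x₀ √ε, ε ^ (-(n / 2 : ℝ)) * Real.exp (-(1 / 4)) ≤ gaussKernel x₀ ε x := by
    intro x hx
    have hx' : ‖x - x₀‖ ^ 2 ≤ √ε ^ 2 := by
      gcongr
      exact (mem_ball_iff_norm.1 hx).le
    rw [Real.sq_sqrt hε.le] at hx'
    refine mul_le_mul_of_nonneg_left (Real.exp_le_exp.2 (neg_le_neg ?_)) (by positivity)
    rw [div_le_div_iff₀ (by positivity) (by norm_num)]
    linarith
  have hint : IntegrableOn (gaussKernel x₀ ε) (ball x₀ √ε) := by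
    have hcont : Continuous (gaussKernel x₀ ε) :=
      continuous_iff_continuousAt.2 fun x => (hasFDerivAt_gaussKernel x₀ ε x).continuousAt
    exact (hcont.continuousOn.integrableOn_compact (isCompact_closedBall x₀ √ε)).mono_set
      ball_subset_closedBall
  calc Real.exp (-(1 / 4)) * volume.real (ball (0 : 𝔼 n) 1)
      = ε ^ (-(n / 2 : ℝ)) * Real.exp (-(1 / 4)) * volume.real (ball x₀ √ε) := by
        rw [volume_real_ball_of_pos x₀ hs]
        linear_combination (-(Real.exp (-(1 / 4)) * volume.real (ball (0 : 𝔼 n) 1))) * hpow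
    _ ≤ ∫ x in ball x₀ √ε, gaussKernel x₀ ε x :=
        setIntegral_ge_of_const_le_real measurableSet_ball measure_ball_lt_top.ne hge hint

end Gaussian

section Duality

/-- A nonnegative `C²` subsolution of the heat equation on `(0, T) × ℝⁿ` with vanishing initial
data. The initial data are taken in `L¹_loc`, which is what survives the duality argument. -/
structure IsHeatSubsolution {n : ℕ} (T : ℝ) (f : ℝ → 𝔼 n → ℝ) : Prop where
  contDiffOn : ContDiffOn ℝ 2 (Function.uncurry f) (Ioo 0 T ×ˢ univ)
  nonneg : ∀ t ∈ Ioo 0 T, ∀ x, 0 ≤ f t x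
  deriv_le : ∀ t ∈ Ioo 0 T, ∀ x, deriv (fun s => f s x) t ≤ heatLap (f t) x
  tendsto_zero : ∀ R > 0, Tendsto (fun t => ∫⁻ x in ball (0 : 𝔼 n) R, ENNReal.ofReal (f t x))
    (nhdsWithin 0 (Ioi 0)) (nhds 0)

/-- A nonnegative test function on `(0, T) × ℝⁿ`, supported in `Q` at every time, which solves the
backward heat equation up to a one-sided error `κ`. -/
structure IsBackwardTest {n : ℕ} (T κ : ℝ) (Q : Set (𝔼 n)) (ψ : ℝ → 𝔼 n → ℝ) : Prop where
  contDiffOn : ContDiffOn ℝ 2 (Function.uncurry ψ) (Ioo 0 T ×ˢ univ)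
  nonneg : ∀ t ∈ Ioo 0 T, ∀ x, 0 ≤ ψ t x
  eq_zero : ∀ t ∈ Ioo 0 T, ∀ x ∉ Q, ψ t x = 0
  deriv_add_heatLap_le : ∀ t ∈ Ioo 0 T, ∀ x, deriv (fun s => ψ s x) t + heatLap (ψ t) x ≤ κ

/-- The mass of the positive part of `u` on the cylinder `(0, T) × B(x₀, R)`. -/
noncomputable def cylinderLintegral {n : ℕ} (T : ℝ) (x₀ : 𝔼 n) (R : ℝ) (u : ℝ → 𝔼 n → ℝ) :
    ENNReal :=
  ∫⁻ t in Ioo 0 T, ∫⁻ x in ball x₀ R, ENNReal.ofReal (u t x)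

variable {n : ℕ} {T κ : ℝ} {Q : Set (𝔼 n)} {f ψ : ℝ → 𝔼 n → ℝ}

theorem IsHeatSubsolution.mono {S : ℝ} (hf : IsHeatSubsolution T f) (hST : S ≤ T) :
    IsHeatSubsolution S f where
  contDiffOn := hf.contDiffOn.mono (prod_mono (Ioo_subset_Ioo_right hST) subset_rfl)
  nonneg t ht := hf.nonneg t (Ioo_subset_Ioo_right hST ht)
  deriv_le t ht := hf.deriv_le t (Ioo_subset_Ioo_right hST ht)
  tendsto_zero := hf.tendsto_zero

theorem IsBackwardTest.heatLap_eq_zero (hψ : IsBackwardTest T κ Q ψ) (hQ : IsClosed Q) {t : ℝ}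
    (ht : t ∈ Ioo 0 T) {x : 𝔼 n} (hx : x ∉ Q) : heatLap (ψ t) x = 0 := by
  refine heatLap_eq_zero_of_eventuallyEq_const (c := 0) ?_
  filter_upwards [hQ.isOpen_compl.mem_nhds hx] with y hy using hψ.eq_zero t ht y hy

theorem IsBackwardTest.setIntegral_heatLap_mul_comm (hψ : IsBackwardTest T κ Q ψ)
    (hQ : IsCompact Q) {t : ℝ} (ht : t ∈ Ioo 0 T) {g : 𝔼 n → ℝ} (hg : ContDiff ℝ 2 g) :
    ∫ x in Q, heatLap g x * ψ t x = ∫ x in Q, g x * heatLap (ψ t) x := by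
  rw [setIntegral_eq_integral_of_forall_compl_eq_zero
      fun x hx => by rw [hψ.eq_zero t ht x hx, mul_zero],
    setIntegral_eq_integral_of_forall_compl_eq_zero
      fun x hx => by rw [hψ.heatLap_eq_zero hQ.isClosed ht hx, mul_zero]]
  exact integral_heatLap_mul_comm hg (contDiff_of_contDiffOn_uncurry hψ.contDiffOn ht)
    (HasCompactSupport.intro hQ (hψ.eq_zero t ht))

theorem IsHeatSubsolution.setIntegral_deriv_mul_le (hf : IsHeatSubsolution T f)
    (hψ : IsBackwardTest T κ Q ψ) (hQ : IsCompact Q) {t : ℝ} (ht : t ∈ Ioo 0 T) :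
    ∫ x in Q, deriv (fun s => f s x * ψ s x) t ≤ κ * ∫ x in Q, f t x := by
  have hint : ∀ {w : 𝔼 n → ℝ}, Continuous w → IntegrableOn w Q := fun hw =>
    hw.continuousOn.integrableOn_compact hQ
  have hf₂ := contDiff_of_contDiffOn_uncurry hf.contDiffOn ht
  have hψ₂ := contDiff_of_contDiffOn_uncurry hψ.contDiffOn ht
  have hf₁ := hf.contDiffOn.of_le one_le_two
  have hψ₁ := hψ.contDiffOn.of_le one_le_two
  have hψ' := continuous_deriv_of_contDiffOn_uncurry isOpen_Ioo hψ₁ ht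
  have hprod : ∀ x, deriv (fun s => f s x * ψ s x) t
      = deriv (fun s => f s x) t * ψ t x + f t x * deriv (fun s => ψ s x) t := fun x =>
    deriv_fun_mul (hasDerivAt_of_contDiffOn_uncurry isOpen_Ioo hf₁ ht x).differentiableAt
      (hasDerivAt_of_contDiffOn_uncurry isOpen_Ioo hψ₁ ht x).differentiableAt
  have hΔfψ := hint ((continuous_heatLap hf₂).fun_mul hψ₂.continuous)
  have hfΔψ := hint (hf₂.continuous.fun_mul (continuous_heatLap hψ₂))
  have hfψ' := hint (hf₂.continuous.fun_mul hψ')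
  calc ∫ x in Q, deriv (fun s => f s x * ψ s x) t
      ≤ ∫ x in Q, (heatLap (f t) x * ψ t x + f t x * deriv (fun s => ψ s x) t) := by
        refine setIntegral_mono (hint (continuous_deriv_of_contDiffOn_uncurry
          (u := fun t x => f t x * ψ t x) isOpen_Ioo (hf₁.mul hψ₁) ht)) (hΔfψ.add hfψ')
          fun x => (hprod x).trans_le ?_
        gcongr
        · exact hψ.nonneg t ht x
        · exact hf.deriv_le t ht x
    _ = ∫ x in Q, f t x * (deriv (fun s => ψ s x) t + heatLap (ψ t) x) := by
        rw [integral_add hΔfψ hfψ', hψ.setIntegral_heatLap_mul_comm hQ ht hf₂, add_comm,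
          ← integral_add hfψ' hfΔψ]
        simp only [mul_add]
    _ ≤ ∫ x in Q, f t x * κ :=
        setIntegral_mono (hint (hf₂.continuous.mul (hψ'.add (continuous_heatLap hψ₂))))
          (hint (hf₂.continuous.mul continuous_const)) fun x =>
          mul_le_mul_of_nonneg_left (hψ.deriv_add_heatLap_le t ht x) (hf.nonneg t ht x)
    _ = κ * ∫ x in Q, f t x := by rw [integral_mul_const, mul_comm]

theorem IsHeatSubsolution.setIntegral_mul_le_add (hf : IsHeatSubsolution T f)
    (hψ : IsBackwardTest T κ Q ψ) (hQ : IsCompact Q) {a b : ℝ} (ha : 0 < a) (hab : a ≤ b)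
    (hb : b < T) :
    ∫ x in Q, f b x * ψ b x ≤ (∫ x in Q, f a x * ψ a x) + κ * ∫ t in a..b, ∫ x in Q, f t x := by
  have hI : Icc a b ⊆ Ioo 0 T := Icc_subset_Ioo ha hb
  have hfψ : ContDiffOn ℝ 1 (Function.uncurry fun t x => f t x * ψ t x) (Ioo 0 T ×ˢ univ) :=
    (hf.contDiffOn.mul hψ.contDiffOn).of_le one_le_two
  rw [← sub_le_iff_le_add', setIntegral_sub_setIntegral_eq_intervalIntegral_deriv
      (u := fun t x => f t x * ψ t x) volume isOpen_Ioo hfψ hQ hab hI,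
    ← intervalIntegral.integral_const_mul]
  refine intervalIntegral.integral_mono_on hab ?_ ?_ fun t ht =>
    hf.setIntegral_deriv_mul_le hψ hQ (hI ht)
  · exact intervalIntegrable_setIntegral_of_continuousOn volume
      (continuousOn_deriv_of_contDiffOn_uncurry (u := fun t x => f t x * ψ t x) isOpen_Ioo hfψ)
      hQ hab hI
  · exact (intervalIntegrable_setIntegral_of_continuousOn volume hf.contDiffOn.continuousOn
      hQ hab hI).const_mul κ

theorem ofReal_integral_le_lintegral_ofReal {α : Type*} [MeasurableSpace α] {μ : Measure α}
    {g : α → ℝ} (hg : 0 ≤ᵐ[μ] g) :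
    ENNReal.ofReal (∫ x, g x ∂μ) ≤ ∫⁻ x, ENNReal.ofReal (g x) ∂μ := by
  by_cases hint : Integrable g μ
  · exact (ofReal_integral_eq_lintegral_ofReal hint hg).le
  · simp [integral_undef hint]

theorem IsHeatSubsolution.ofReal_setIntegral_mul_le (hf : IsHeatSubsolution T f)
    (hψ : IsBackwardTest T κ Q ψ) {R B t : ℝ} (hQR : Q ⊆ ball 0 R)
    (ht : t ∈ Ioo 0 T) (hB : ∀ x, ψ t x ≤ B) :
    ENNReal.ofReal (∫ x in Q, f t x * ψ t x)
      ≤ ENNReal.ofReal B * ∫⁻ x in ball 0 R, ENNReal.ofReal (f t x) := by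
  rw [← lintegral_const_mul' _ _ ENNReal.ofReal_ne_top]
  refine (ofReal_integral_le_lintegral_ofReal (Eventually.of_forall fun x =>
    mul_nonneg (hf.nonneg t ht x) (hψ.nonneg t ht x))).trans
    ((lintegral_mono fun x => ?_).trans (lintegral_mono_set hQR))
  simp only
  rw [← ENNReal.ofReal_mul ((hψ.nonneg t ht x).trans (hB x)), mul_comm]
  exact ENNReal.ofReal_le_ofReal (mul_le_mul_of_nonneg_right (hB x) (hf.nonneg t ht x))

theorem IsHeatSubsolution.ofReal_intervalIntegral_setIntegral_le (hf : IsHeatSubsolution T f)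
    {x₀ : 𝔼 n} {R a b : ℝ} (hQR : Q ⊆ ball x₀ R) (ha : 0 < a) (hab : a ≤ b) (hb : b < T) :
    ENNReal.ofReal (∫ t in a..b, ∫ x in Q, f t x) ≤ cylinderLintegral T x₀ R f := by
  have hI : Ioc a b ⊆ Ioo 0 T := fun t ht => ⟨ha.trans ht.1, ht.2.trans_lt hb⟩
  have hnonneg : ∀ t ∈ Ioc a b, 0 ≤ᵐ[volume.restrict Q] f t := fun t ht =>
    Eventually.of_forall (hf.nonneg t (hI ht))
  rw [intervalIntegral.integral_of_le hab]
  refine (ofReal_integral_le_lintegral_ofReal ?_).trans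
    ((setLIntegral_mono' measurableSet_Ioc fun t ht => ?_).trans (lintegral_mono_set hI))
  · filter_upwards [ae_restrict_mem measurableSet_Ioc] with t ht
    exact integral_nonneg_of_ae (hnonneg t ht)
  · exact (ofReal_integral_le_lintegral_ofReal (hnonneg t ht)).trans (lintegral_mono_set hQR)

theorem IsHeatSubsolution.ofReal_setIntegral_mul_le_cylinderLintegral
    (hf : IsHeatSubsolution T f) (hψ : IsBackwardTest T κ Q ψ) (hκ : 0 ≤ κ) (hQ : IsCompact Q)
    {x₀ : 𝔼 n} {R : ℝ} (hQR : Q ⊆ ball x₀ R) {b B : ℝ} (hb : b ∈ Ioo 0 T)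
    (hB : ∀ t ∈ Ioc 0 b, ∀ x, ψ t x ≤ B) :
    ENNReal.ofReal (∫ x in Q, f b x * ψ b x)
      ≤ ENNReal.ofReal κ * cylinderLintegral T x₀ R f := by
  obtain ⟨ρ, hρ, hQρ⟩ := hQ.isBounded.subset_ball_lt 0 (0 : 𝔼 n)
  have hle : ∀ a ∈ Ioc 0 b, ENNReal.ofReal (∫ x in Q, f b x * ψ b x)
      ≤ ENNReal.ofReal B * (∫⁻ x in ball 0 ρ, ENNReal.ofReal (f a x))
        + ENNReal.ofReal κ * cylinderLintegral T x₀ R f := by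
    intro a ha
    refine (ENNReal.ofReal_le_ofReal (hf.setIntegral_mul_le_add hψ hQ ha.1 ha.2 hb.2)).trans
      (ENNReal.ofReal_add_le.trans (add_le_add ?_ ?_))
    · exact hf.ofReal_setIntegral_mul_le hψ hQρ ⟨ha.1, ha.2.trans_lt hb.2⟩ (hB a ha)
    · rw [ENNReal.ofReal_mul hκ]
      gcongr
      exact hf.ofReal_intervalIntegral_setIntegral_le hQR ha.1 ha.2 hb.2
  have hlim := (ENNReal.Tendsto.const_mul (hf.tendsto_zero ρ hρ)
    (Or.inr (ENNReal.ofReal_ne_top (r := B)))).add_const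
    (ENNReal.ofReal κ * cylinderLintegral T x₀ R f)
  rw [mul_zero, zero_add] at hlim
  exact ge_of_tendsto hlim (mem_of_superset (Ioc_mem_nhdsGT hb.1) hle)

end Duality

section BackwardKernel

/-- A smooth cutoff on `ℝⁿ`, equal to `1` on `B(0, 1/4)` and supported in `closedBall 0 (1/2)`. -/
noncomputable def unitCutoff (n : ℕ) : ContDiffBump (0 : 𝔼 n) where
  rIn := 1 / 4
  rOut := 1 / 2
  rIn_pos := by norm_num
  rIn_lt_rOut := by norm_num

/-- The backward heat kernel with pole `(T, x₀)`, cut off at distance `R / 2` from `x₀`. -/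
noncomputable def backwardKernel {n : ℕ} (x₀ : 𝔼 n) (R T t : ℝ) (x : 𝔼 n) : ℝ :=
  unitCutoff n (R⁻¹ • (x - x₀)) * gaussKernel x₀ (T - t) x

variable {n : ℕ}

theorem heatLap_unitCutoff_eq_zero {z : 𝔼 n} (hz : ‖z‖ < 1 / 4) : heatLap (unitCutoff n) z = 0 :=
  heatLap_eq_zero_of_eventuallyEq_const
    ((unitCutoff n).eventuallyEq_one_of_mem_ball (mem_ball_zero_iff.2 hz))

theorem fderiv_unitCutoff_eq_zero {z : 𝔼 n} (hz : ‖z‖ < 1 / 4) :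
    fderiv ℝ (unitCutoff n) z = 0 := by
  rw [((unitCutoff n).eventuallyEq_one_of_mem_ball (mem_ball_zero_iff.2 hz)).fderiv_eq,
    fderiv_one, Pi.zero_apply]

theorem exists_abs_heatLap_unitCutoff_le (n : ℕ) : ∃ M : ℝ,
    ∀ z, |heatLap (unitCutoff n) z| ≤ M ∧ |fderiv ℝ (unitCutoff n) z z| ≤ M := by
  have hη : ContDiff ℝ 2 (unitCutoff n) := (unitCutoff n).contDiff
  have hc := (unitCutoff n).hasCompactSupport
  obtain ⟨M₁, hM₁⟩ :=
    (continuous_heatLap hη).bounded_above_of_compact_support (hasCompactSupport_heatLap hc)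
  obtain ⟨M₂, hM₂⟩ :=
    ((hη.continuous_fderiv two_ne_zero).clm_apply continuous_id).bounded_above_of_compact_support
      ((hc.fderiv (𝕜 := ℝ)).mono fun z hz h => hz (by simp [h]))
  exact ⟨max M₁ M₂, fun z => ⟨(hM₁ z).trans (le_max_left _ _), (hM₂ z).trans (le_max_right _ _)⟩⟩

theorem backwardKernel_nonneg (x₀ : 𝔼 n) (R : ℝ) {T t : ℝ} (ht : t ≤ T) (x : 𝔼 n) :
    0 ≤ backwardKernel x₀ R T t x :=
  mul_nonneg (unitCutoff n).nonneg (gaussKernel_nonneg x₀ (sub_nonneg.2 ht) x)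

theorem backwardKernel_le_gaussKernel (x₀ : 𝔼 n) (R : ℝ) {T t : ℝ} (ht : t ≤ T) (x : 𝔼 n) :
    backwardKernel x₀ R T t x ≤ gaussKernel x₀ (T - t) x :=
  mul_le_of_le_one_left (gaussKernel_nonneg x₀ (sub_nonneg.2 ht) x) (unitCutoff n).le_one

theorem backwardKernel_eq_gaussKernel {x₀ : 𝔼 n} {R : ℝ} (hR : 0 < R) (T t : ℝ) {x : 𝔼 n}
    (hx : ‖x - x₀‖ ≤ R / 4) : backwardKernel x₀ R T t x = gaussKernel x₀ (T - t) x := by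
  rw [backwardKernel, (unitCutoff n).one_of_mem_closedBall, one_mul]
  rw [mem_closedBall_zero_iff, norm_smul, norm_inv, Real.norm_of_nonneg hR.le, inv_mul_le_iff₀ hR]
  exact hx.trans_eq (div_eq_mul_one_div R 4)

theorem backwardKernel_eq_zero {x₀ : 𝔼 n} {R : ℝ} (hR : 0 < R) (T t : ℝ) {x : 𝔼 n}
    (hx : x ∉ closedBall x₀ (R / 2)) : backwardKernel x₀ R T t x = 0 := by
  rw [mem_closedBall_iff_norm, not_le] at hx
  rw [backwardKernel, (unitCutoff n).zero_of_le_dist, zero_mul]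
  rw [dist_zero_right, norm_smul, norm_inv, Real.norm_of_nonneg hR.le, le_inv_mul_iff₀ hR]
  exact (div_eq_mul_one_div R 2).symm.trans_le hx.le

theorem contDiffOn_backwardKernel (x₀ : 𝔼 n) (R T : ℝ) :
    ContDiffOn ℝ 2 (Function.uncurry (backwardKernel x₀ R T)) (Iio T ×ˢ univ) := by
  have hcut : ContDiff ℝ 2 fun q : ℝ × 𝔼 n => unitCutoff n (R⁻¹ • (q.2 - x₀)) :=
    (unitCutoff n).contDiff.comp ((contDiff_snd.sub contDiff_const).const_smul R⁻¹)
  have hshift : ContDiff ℝ 2 fun q : ℝ × 𝔼 n => (T - q.1, q.2) :=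
    (contDiff_const.sub contDiff_fst).prodMk contDiff_snd
  exact hcut.contDiffOn.mul ((contDiffOn_gaussKernel x₀).comp hshift.contDiffOn
    fun q hq => ⟨mem_Ioi.2 (sub_pos.2 hq.1), mem_univ q.2⟩)

/-- The backward heat operator annihilates the Gaussian, so only derivatives of the cutoff
remain. -/
theorem deriv_add_heatLap_backwardKernel (x₀ : 𝔼 n) (R : ℝ) {T t : ℝ} (ht : t < T) (x : 𝔼 n) :
    deriv (fun s => backwardKernel x₀ R T s x) t + heatLap (backwardKernel x₀ R T t) x
      = gaussKernel x₀ (T - t) x * ((R ^ 2)⁻¹ * heatLap (unitCutoff n) (R⁻¹ • (x - x₀))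
        - (T - t)⁻¹ * fderiv ℝ (unitCutoff n) (R⁻¹ • (x - x₀)) (R⁻¹ • (x - x₀))) := by
  have hτ : 0 < T - t := sub_pos.2 ht
  have hη : ContDiff ℝ 2 (unitCutoff n) := (unitCutoff n).contDiff
  have hcut : ContDiff ℝ 2 fun y => unitCutoff n (R⁻¹ • (y - x₀)) :=
    hη.comp ((contDiff_id.sub contDiff_const).const_smul R⁻¹)
  have hgauss : ContDiff ℝ 2 (gaussKernel x₀ (T - t)) :=
    contDiff_of_contDiffOn_uncurry (contDiffOn_gaussKernel x₀) (mem_Ioi.2 hτ)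
  have hderiv := ((hasDerivAt_gaussKernel x₀ hτ x).comp_const_sub T t).const_mul
    (unitCutoff n (R⁻¹ • (x - x₀)))
  have hlap := heatLap_mul hcut hgauss x
  rw [sum_fderiv_mul_fderiv_gaussKernel, heatLap_gaussKernel, heatLap_comp_smul_sub hη,
    fderiv_comp_smul_sub (hη.differentiable two_ne_zero), ← smul_eq_mul (a := R⁻¹),
    ← map_smul] at hlap
  unfold backwardKernel
  rw [hderiv.deriv, hlap]
  field_simp
  ring

theorem exists_isBackwardTest_backwardKernel (n : ℕ) : ∃ K ≥ (0 : ℝ), ∀ {R T : ℝ}, 0 < R →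
    ∀ x₀ : 𝔼 n, IsBackwardTest T (K * ((R ^ (n + 2))⁻¹ * Real.exp (-(R ^ 2 / (128 * T)))))
      (closedBall x₀ (R / 2)) (backwardKernel x₀ R T) := by
  obtain ⟨K, hK, hgauss⟩ := exists_gaussKernel_mul_inv_add_inv_le n
  obtain ⟨M, hM⟩ := exists_abs_heatLap_unitCutoff_le n
  have hM₀ : 0 ≤ M := (abs_nonneg _).trans (hM 0).1
  refine ⟨M * K, by positivity, fun {R T} hR x₀ =>
    { contDiffOn := (contDiffOn_backwardKernel x₀ R T).mono
        (prod_mono Ioo_subset_Iio_self subset_rfl)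
      nonneg := fun t ht x => backwardKernel_nonneg x₀ R ht.2.le x
      eq_zero := fun t _ x hx => backwardKernel_eq_zero hR T t hx
      deriv_add_heatLap_le := fun t ht x => ?_ }⟩
  have hτ : 0 < T - t := sub_pos.2 ht.2
  rw [deriv_add_heatLap_backwardKernel x₀ R ht.2 x]
  set z := R⁻¹ • (x - x₀) with hz
  rcases lt_or_ge ‖z‖ (1 / 4) with hsmall | hlarge
  · rw [heatLap_unitCutoff_eq_zero hsmall, fderiv_unitCutoff_eq_zero hsmall, zero_apply,
      mul_zero, mul_zero, sub_zero, mul_zero]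
    positivity
  have hx : R / 4 ≤ ‖x - x₀‖ := by
    rw [hz, norm_smul, norm_inv, Real.norm_of_nonneg hR.le, le_inv_mul_iff₀ hR] at hlarge
    linarith
  have hgauss₀ := gaussKernel_nonneg x₀ hτ.le x
  calc gaussKernel x₀ (T - t) x
        * ((R ^ 2)⁻¹ * heatLap (unitCutoff n) z - (T - t)⁻¹ * fderiv ℝ (unitCutoff n) z z)
      ≤ gaussKernel x₀ (T - t) x * ((R ^ 2)⁻¹ * M + (T - t)⁻¹ * M) := by
        rw [sub_eq_add_neg (_ * _), ← mul_neg]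
        gcongr
        · exact (le_abs_self _).trans (hM z).1
        · exact (neg_le_abs _).trans (hM z).2
    _ = M * (gaussKernel x₀ (T - t) x * ((R ^ 2)⁻¹ + (T - t)⁻¹)) := by ring
    _ ≤ M * (K * ((R ^ (n + 2))⁻¹ * Real.exp (-(R ^ 2 / (128 * T))))) :=
        mul_le_mul_of_nonneg_left (hgauss hR hτ (sub_le_self T ht.1.le) hx) hM₀
    _ = M * K * ((R ^ (n + 2))⁻¹ * Real.exp (-(R ^ 2 / (128 * T)))) := (mul_assoc _ _ _).symm

end BackwardKernel

section CylinderMass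

variable {n : ℕ} {T : ℝ} {x₀ : 𝔼 n} {R : ℝ} {u v : ℝ → 𝔼 n → ℝ}

theorem cylinderLintegral_mono {S r : ℝ} {y : 𝔼 n} (hST : S ≤ T) (hball : ball y r ⊆ ball x₀ R)
    (u : ℝ → 𝔼 n → ℝ) : cylinderLintegral S y r u ≤ cylinderLintegral T x₀ R u :=
  (lintegral_mono_set (Ioo_subset_Ioo_right hST)).trans
    (lintegral_mono fun _ => lintegral_mono_set hball)

theorem cylinderLintegral_le_const_mul {c : ℝ} (hc : 0 ≤ c)
    (huv : ∀ t ∈ Ioo 0 T, ∀ x ∈ ball x₀ R, u t x ≤ c * v t x) :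
    cylinderLintegral T x₀ R u ≤ ENNReal.ofReal c * cylinderLintegral T x₀ R v := by
  simp only [cylinderLintegral, ← lintegral_const_mul' _ _ ENNReal.ofReal_ne_top,
    ← ENNReal.ofReal_mul hc]
  exact setLIntegral_mono' measurableSet_Ioo fun t ht =>
    setLIntegral_mono' measurableSet_ball fun x hx => ENNReal.ofReal_le_ofReal (huv t ht x hx)

theorem cylinderLintegral_one (T : ℝ) (x₀ : 𝔼 n) (R : ℝ) :
    cylinderLintegral T x₀ R (fun _ _ => 1) = ENNReal.ofReal (T * volume.real (ball x₀ R)) := by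
  rw [ENNReal.ofReal_mul' measureReal_nonneg, ofReal_measureReal measure_ball_lt_top.ne, mul_comm]
  simp [cylinderLintegral]

end CylinderMass

section MeanValue

theorem le_setIntegral_mul_backwardKernel {n : ℕ} {g : 𝔼 n → ℝ} (hg : Continuous g)
    (hg₀ : ∀ x, 0 ≤ g x) {x₀ : 𝔼 n} {R ε A : ℝ} (hR : 0 < R) (hε : 0 < ε) (hεR : √ε ≤ R / 4)
    (hA : 0 ≤ A) (hAg : ∀ x ∈ ball x₀ √ε, A ≤ g x) (t : ℝ) :
    A * (Real.exp (-(1 / 4)) * volume.real (ball (0 : 𝔼 n) 1))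
      ≤ ∫ x in closedBall x₀ (R / 2), g x * backwardKernel x₀ R (t + ε) t x := by
  have hψ : Continuous (backwardKernel x₀ R (t + ε) t) :=
    (contDiff_of_contDiffOn_uncurry (contDiffOn_backwardKernel x₀ R (t + ε))
      (mem_Iio.2 (lt_add_of_pos_right t hε))).continuous
  have hψ₀ := backwardKernel_nonneg x₀ R (le_add_of_nonneg_right (a := t) hε.le)
  have hint : IntegrableOn (fun x => g x * backwardKernel x₀ R (t + ε) t x)
      (closedBall x₀ (R / 2)) :=
    (hg.mul hψ).continuousOn.integrableOn_compact (isCompact_closedBall x₀ (R / 2))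
  have hsub : ball x₀ √ε ⊆ closedBall x₀ (R / 2) :=
    ball_subset_closedBall.trans (closedBall_subset_closedBall (by linarith))
  have hle : ∀ x ∈ ball x₀ √ε,
      A * gaussKernel x₀ ε x ≤ g x * backwardKernel x₀ R (t + ε) t x := fun x hx => by
    rw [backwardKernel_eq_gaussKernel hR _ _ ((mem_ball_iff_norm.1 hx).le.trans hεR),
      add_sub_cancel_left]
    exact mul_le_mul_of_nonneg_right (hAg x hx) (gaussKernel_nonneg x₀ hε.le x)
  calc A * (Real.exp (-(1 / 4)) * volume.real (ball (0 : 𝔼 n) 1))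
      ≤ A * ∫ x in ball x₀ √ε, gaussKernel x₀ ε x :=
        mul_le_mul_of_nonneg_left (le_setIntegral_gaussKernel x₀ hε) hA
    _ = ∫ x in ball x₀ √ε, A * gaussKernel x₀ ε x := (integral_const_mul _ _).symm
    _ ≤ ∫ x in ball x₀ √ε, g x * backwardKernel x₀ R (t + ε) t x :=
        integral_mono_of_nonneg
          (Eventually.of_forall fun x => mul_nonneg hA (gaussKernel_nonneg x₀ hε.le x))
          (hint.mono_set hsub) ((ae_restrict_mem measurableSet_ball).mono hle)
    _ ≤ ∫ x in closedBall x₀ (R / 2), g x * backwardKernel x₀ R (t + ε) t x :=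
        setIntegral_mono_set hint (Eventually.of_forall fun x => mul_nonneg (hg₀ x) (hψ₀ x))
          hsub.eventuallyLE

theorem exists_ofReal_setIntegral_mul_backwardKernel_le (n : ℕ) : ∃ K ≥ (0 : ℝ),
    ∀ {T : ℝ} {f : ℝ → 𝔼 n → ℝ}, IsHeatSubsolution T f → ∀ {t ε : ℝ}, 0 < t → 0 < ε →
    t + ε ≤ T → ∀ (x₀ : 𝔼 n) {R : ℝ}, 0 < R →
    ENNReal.ofReal (∫ x in closedBall x₀ (R / 2), f t x * backwardKernel x₀ R (t + ε) t x)
      ≤ ENNReal.ofReal (K * ((R ^ (n + 2))⁻¹ * Real.exp (-(R ^ 2 / (128 * T)))))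
        * cylinderLintegral T x₀ R f := by
  obtain ⟨K, hK, htest⟩ := exists_isBackwardTest_backwardKernel n
  refine ⟨K, hK, fun {T f} hf {t ε} ht hε htε x₀ {R} hR => ?_⟩
  have hψ_le : ∀ s ∈ Ioc 0 t, ∀ x, backwardKernel x₀ R (t + ε) s x ≤ ε ^ (-(n / 2 : ℝ)) := by
    intro s hs x
    have hεs : ε ≤ t + ε - s := by linarith [hs.2]
    exact (backwardKernel_le_gaussKernel x₀ R (by linarith) x).trans
      ((gaussKernel_le x₀ (hε.le.trans hεs) x).trans
        (Real.rpow_le_rpow_of_nonpos hε hεs (neg_nonpos.2 (by positivity))))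
  refine ((hf.mono htε).ofReal_setIntegral_mul_le_cylinderLintegral (htest hR x₀) (by positivity)
    (isCompact_closedBall x₀ _) (closedBall_subset_ball (half_lt_self hR))
    ⟨ht, lt_add_of_pos_right t hε⟩ hψ_le).trans ?_
  gcongr
  exact cylinderLintegral_mono htε subset_rfl f

theorem exists_ofReal_le_cylinderLintegral (n : ℕ) : ∃ K ≥ (0 : ℝ),
    ∀ {T : ℝ} {f : ℝ → 𝔼 n → ℝ}, IsHeatSubsolution T f → ∀ {t : ℝ}, t ∈ Ioo 0 T →
    ∀ (x₀ : 𝔼 n) {R : ℝ}, 0 < R →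
    ENNReal.ofReal (f t x₀)
      ≤ ENNReal.ofReal (K * ((R ^ (n + 2))⁻¹ * Real.exp (-(R ^ 2 / (128 * T)))))
        * cylinderLintegral T x₀ R f := by
  obtain ⟨K, hK, hupper⟩ := exists_ofReal_setIntegral_mul_backwardKernel_le n
  set c := Real.exp (-(1 / 4)) * volume.real (ball (0 : 𝔼 n) 1)
  have hc : 0 < c := mul_pos (Real.exp_pos _)
    (ENNReal.toReal_pos (measure_ball_pos volume _ one_pos).ne' measure_ball_lt_top.ne)
  refine ⟨2 / c * K, by positivity, fun {T f} hf {t} ht x₀ {R} hR => ?_⟩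
  have hcont : Continuous (f t) := (contDiff_of_contDiffOn_uncurry hf.contDiffOn ht).continuous
  rcases (hf.nonneg t ht x₀).eq_or_lt with hzero | hpos
  · simp [← hzero]
  obtain ⟨δ, hδ, hball⟩ := Metric.eventually_nhds_iff_ball.1
    (hcont.continuousAt.eventually (lt_mem_nhds (half_lt_self hpos)))
  obtain ⟨ε, hε, htε, hεr⟩ : ∃ ε > 0, t + ε ≤ T ∧ √ε ≤ min δ (R / 4) := by
    refine ⟨min (T - t) (min δ (R / 4) ^ 2), lt_min (sub_pos.2 ht.2) (by positivity), ?_, ?_⟩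
    · linarith [min_le_left (T - t) (min δ (R / 4) ^ 2)]
    · exact Real.sqrt_le_iff.2 ⟨by positivity, min_le_right _ _⟩
  have hlower := le_setIntegral_mul_backwardKernel hcont (hf.nonneg t ht) hR hε
    (hεr.trans (min_le_right _ _)) (half_pos hpos).le
    (fun x hx => (hball x (ball_subset_ball (hεr.trans (min_le_left _ _)) hx)).le) t
  calc ENNReal.ofReal (f t x₀) = ENNReal.ofReal (2 / c) * ENNReal.ofReal (f t x₀ / 2 * c) := by
        rw [← ENNReal.ofReal_mul (by positivity)]
        congr 1
        field_simp
    _ ≤ ENNReal.ofReal (2 / c) * (ENNReal.ofReal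
          (K * ((R ^ (n + 2))⁻¹ * Real.exp (-(R ^ 2 / (128 * T))))) * cylinderLintegral T x₀ R f) :=
        mul_le_mul_right ((ENNReal.ofReal_le_ofReal hlower).trans (hupper hf ht.1 hε htε x₀ hR)) _
    _ = ENNReal.ofReal (2 / c * K * ((R ^ (n + 2))⁻¹ * Real.exp (-(R ^ 2 / (128 * T)))))
          * cylinderLintegral T x₀ R f := by
        rw [← mul_assoc, ← ENNReal.ofReal_mul (by positivity), mul_assoc (2 / c)]

end MeanValue

section Absorption

variable {p a : ℝ} {ι X : Type*} [PseudoMetricSpace X] {g : ι → X → ℝ} {x₀ : X} {ρ : ℝ} {N : ℕ}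

theorem le_rpow_inv_of_le_mul_rpow {S : ℝ} (hp : 0 < p) (hS : 0 ≤ S) (ha : 0 ≤ a)
    (h : S ≤ a * S ^ (1 - p)) : S ≤ a ^ p⁻¹ := by
  rcases hS.eq_or_lt with rfl | hpos
  · positivity
  · rw [Real.le_rpow_inv_iff_of_pos hS ha hp]
    refine le_of_mul_le_mul_right ?_ (Real.rpow_pos_of_pos hpos (1 - p))
    rwa [← Real.rpow_add hpos, add_sub_cancel, Real.rpow_one]

theorem mul_dist_pow_le_of_forall_ball_le_mul_rpow {S : ℝ} (hS : 0 ≤ S) (ha : 0 ≤ a)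
    (hg₀ : ∀ i x, 0 ≤ g i x) (hgS : ∀ i, ∀ x ∈ ball x₀ ρ, g i x * (ρ - dist x x₀) ^ N ≤ S)
    (hg : ∀ x R M, 0 < R → 0 ≤ M → ball x R ⊆ ball x₀ ρ → (∀ i, ∀ y ∈ ball x R, g i y ≤ M) →
      ∀ i, g i x ≤ (a * (R ^ N)⁻¹) ^ p * M ^ (1 - p)) (i : ι) {x : X} (hx : x ∈ ball x₀ ρ) :
    g i x * (ρ - dist x x₀) ^ N ≤ 2 ^ N * a ^ p * S ^ (1 - p) := by
  obtain ⟨R, hR⟩ : ∃ R, ρ - dist x x₀ = 2 * R := ⟨_, (mul_div_cancel₀ _ (two_ne_zero' ℝ)).symm⟩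
  have hR₀ : 0 < R := by linarith [mem_ball.1 hx]
  have hball : ball x R ⊆ ball x₀ ρ := ball_subset_ball' (by linarith)
  have hle : ∀ j, ∀ y ∈ ball x R, g j y ≤ S * (R ^ N)⁻¹ := fun j y hy => by
    rw [← div_eq_mul_inv, le_div_iff₀ (by positivity)]
    refine (mul_le_mul_of_nonneg_left (pow_le_pow_left₀ hR₀.le ?_ N) (hg₀ j y)).trans
      (hgS j y (hball hy))
    linarith [mem_ball.1 hy, dist_triangle y x x₀]
  calc g i x * (ρ - dist x x₀) ^ N
      ≤ (a * (R ^ N)⁻¹) ^ p * (S * (R ^ N)⁻¹) ^ (1 - p) * (2 * R) ^ N := by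
        rw [hR]
        exact mul_le_mul_of_nonneg_right (hg x R _ hR₀ (by positivity) hball hle i) (by positivity)
    _ = 2 ^ N * a ^ p * S ^ (1 - p) * (((R ^ N)⁻¹ ^ p * (R ^ N)⁻¹ ^ (1 - p)) * R ^ N) := by
        rw [Real.mul_rpow ha (by positivity), Real.mul_rpow hS (by positivity), mul_pow]
        ring
    _ = 2 ^ N * a ^ p * S ^ (1 - p) := by
        rw [← Real.rpow_add (by positivity), add_sub_cancel, Real.rpow_one,
          inv_mul_cancel₀ (by positivity), mul_one]

theorem le_of_forall_ball_le_mul_rpow {B : ℝ} (hρ : 0 < ρ) (hp : 0 < p) (ha : 0 ≤ a)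
    (hg₀ : ∀ i x, 0 ≤ g i x) (hgB : ∀ i, ∀ x ∈ ball x₀ ρ, g i x ≤ B)
    (hg : ∀ x R M, 0 < R → 0 ≤ M → ball x R ⊆ ball x₀ ρ → (∀ i, ∀ y ∈ ball x R, g i y ≤ M) →
      ∀ i, g i x ≤ (a * (R ^ N)⁻¹) ^ p * M ^ (1 - p)) (i : ι) :
    g i x₀ ≤ (2 ^ N : ℝ) ^ p⁻¹ * a * (ρ ^ N)⁻¹ := by
  have hx₀ : x₀ ∈ ball x₀ ρ := mem_ball_self hρ
  have hd : ∀ x ∈ ball x₀ ρ, 0 ≤ ρ - dist x x₀ := fun x hx => (sub_pos.2 hx).le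
  obtain ⟨S, hS⟩ : ∃ S, IsLUB ((fun q : ι × X => g q.1 q.2 * (ρ - dist q.2 x₀) ^ N) ''
      (univ ×ˢ ball x₀ ρ)) S := by
    refine Real.exists_isLUB ⟨_, (i, x₀), ⟨mem_univ _, hx₀⟩, rfl⟩ ⟨B * ρ ^ N, ?_⟩
    rintro _ ⟨⟨j, x⟩, ⟨-, hx⟩, rfl⟩
    exact mul_le_mul (hgB j x hx) (pow_le_pow_left₀ (hd x hx) (sub_le_self _ dist_nonneg) N)
      (pow_nonneg (hd x hx) N) ((hg₀ j x).trans (hgB j x hx))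
  have hgS : ∀ j, ∀ x ∈ ball x₀ ρ, g j x * (ρ - dist x x₀) ^ N ≤ S := fun j x hx =>
    hS.1 ⟨(j, x), ⟨mem_univ _, hx⟩, rfl⟩
  have hS₀ : 0 ≤ S := (mul_nonneg (hg₀ i x₀) (pow_nonneg (hd _ hx₀) N)).trans (hgS i x₀ hx₀)
  have hself : S ≤ 2 ^ N * a ^ p * S ^ (1 - p) := by
    refine hS.2 ?_
    rintro _ ⟨⟨j, x⟩, ⟨-, hx⟩, rfl⟩
    exact mul_dist_pow_le_of_forall_ball_le_mul_rpow hS₀ ha hg₀ hgS hg j hx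
  have hSle := le_rpow_inv_of_le_mul_rpow hp hS₀ (by positivity) hself
  rw [Real.mul_rpow (by positivity) (by positivity), Real.rpow_rpow_inv ha hp.ne'] at hSle
  rw [← div_eq_mul_inv, le_div_iff₀ (by positivity)]
  simpa only [dist_self, sub_zero] using (hgS i x₀ hx₀).trans hSle

end Absorption

section PowerMeanValue

variable {n : ℕ} {T : ℝ} {f : ℝ → 𝔼 n → ℝ}

theorem IsHeatSubsolution.cylinderLintegral_lt_top (hf : IsHeatSubsolution T f) {S : ℝ}
    (hST : S < T) (x₀ : 𝔼 n) (r : ℝ) : cylinderLintegral S x₀ r f < ⊤ := by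
  obtain ⟨ρ, hρ, hball⟩ := (isBounded_ball (x := x₀) (r := r)).subset_ball_lt 0 0
  obtain ⟨δ, hδ, hinit⟩ := mem_nhdsGT_iff_exists_Ioc_subset.1
    ((hf.tendsto_zero ρ hρ).eventually (Iic_mem_nhds zero_lt_one))
  obtain ⟨M, hM⟩ := (isCompact_Icc.prod (isCompact_closedBall (0 : 𝔼 n) ρ)).bddAbove_image
    (hf.contDiffOn.continuousOn.mono
      (prod_mono (Icc_subset_Ioo (mem_Ioi.1 hδ) hST) (subset_univ _)))
  have hsub : Ioo 0 S ⊆ Ioc 0 δ ∪ Icc δ S := fun t ht =>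
    (le_total t δ).imp (fun h => ⟨ht.1, h⟩) fun h => ⟨h, ht.2.le⟩
  refine (cylinderLintegral_mono le_rfl hball f).trans_lt (((lintegral_mono_set hsub).trans
    (lintegral_union_le _ _ _)).trans_lt (ENNReal.add_lt_top.2 ⟨?_, ?_⟩))
  · refine (setLIntegral_mono' (g := fun _ => 1) measurableSet_Ioc fun t ht => hinit ht).trans_lt ?_
    simp
  · have hle : ∀ t ∈ Icc δ S, ∫⁻ x in ball (0 : 𝔼 n) ρ, ENNReal.ofReal (f t x)
        ≤ ENNReal.ofReal M * volume (ball (0 : 𝔼 n) ρ) := fun t ht => by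
      rw [← setLIntegral_const]
      exact setLIntegral_mono' measurableSet_ball fun x hx => ENNReal.ofReal_le_ofReal
        (hM ⟨(t, x), ⟨ht, ball_subset_closedBall hx⟩, rfl⟩)
    refine (setLIntegral_mono' measurableSet_Icc hle).trans_lt ?_
    rw [setLIntegral_const]
    exact ENNReal.mul_lt_top (ENNReal.mul_lt_top ENNReal.ofReal_lt_top measure_ball_lt_top)
      measure_Icc_lt_top

theorem IsHeatSubsolution.exists_forall_le (hf : IsHeatSubsolution T f) {S : ℝ} (hST : S < T)
    (x₀ : 𝔼 n) (r : ℝ) : ∃ M, ∀ t ∈ Ioo 0 S, ∀ x ∈ ball x₀ r, f t x ≤ M := by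
  obtain ⟨K, -, hmean⟩ := exists_ofReal_le_cylinderLintegral n
  refine ⟨_, fun t ht x hx => (ENNReal.ofReal_le_iff_le_toReal (ENNReal.mul_lt_top
    ENNReal.ofReal_lt_top (hf.cylinderLintegral_lt_top hST x₀ (r + 1))).ne).1
    ((hmean (hf.mono hST.le) ht x one_pos).trans (mul_le_mul_right ?_ _))⟩
  exact cylinderLintegral_mono le_rfl (ball_subset_ball' (by linarith [mem_ball.1 hx])) f

theorem le_rpow_mul_rpow {p y M : ℝ} (hp : 0 < p) (hp₁ : p ≤ 1) (hy : 0 ≤ y) (hM : y ^ p ≤ M) :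
    y ≤ M ^ ((1 - p) / p) * y ^ p := by
  calc y = (y ^ p) ^ ((1 - p) / p) * y ^ p := by
        rw [← Real.rpow_mul hy, mul_div_cancel₀ _ hp.ne', ← Real.rpow_add' hy (by simp),
          sub_add_cancel, Real.rpow_one]
    _ ≤ M ^ ((1 - p) / p) * y ^ p := by
        gcongr

theorem exists_rpow_le_mul_rpow (n : ℕ) : ∃ K ≥ (0 : ℝ),
    ∀ {T : ℝ} {f : ℝ → 𝔼 n → ℝ}, IsHeatSubsolution T f → ∀ {p : ℝ}, 0 < p → p ≤ 1 →
    ∀ {t : ℝ}, t ∈ Ioo 0 T → ∀ (x₀ : 𝔼 n) {R M J : ℝ}, 0 < R → 0 ≤ M → 0 ≤ J →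
    (∀ s ∈ Ioo 0 T, ∀ x ∈ ball x₀ R, f s x ^ p ≤ M) →
    cylinderLintegral T x₀ R (fun s x => f s x ^ p) ≤ ENNReal.ofReal J →
    f t x₀ ^ p ≤ (K * J * (R ^ (n + 2))⁻¹) ^ p * M ^ (1 - p) := by
  obtain ⟨K, hK, hmean⟩ := exists_ofReal_le_cylinderLintegral n
  refine ⟨K, hK, fun {T f} hf {p} hp hp₁ {t} ht x₀ {R M J} hR hM hJ hfM hfJ => ?_⟩
  have hexp : Real.exp (-(R ^ 2 / (128 * T))) ≤ 1 :=
    Real.exp_le_one_iff.2 (neg_nonpos.2 (by have := ht.1.trans ht.2; positivity))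
  have hle : f t x₀ ≤ K * J * (R ^ (n + 2))⁻¹ * M ^ ((1 - p) / p) := by
    rw [← ENNReal.ofReal_le_ofReal_iff (by positivity)]
    calc ENNReal.ofReal (f t x₀)
        ≤ ENNReal.ofReal (K * ((R ^ (n + 2))⁻¹ * 1))
            * (ENNReal.ofReal (M ^ ((1 - p) / p)) * ENNReal.ofReal J) := by
          refine (hmean hf ht x₀ hR).trans (mul_le_mul' (by gcongr) ?_)
          refine (cylinderLintegral_le_const_mul (by positivity) fun s hs x hx => ?_).trans
            (mul_le_mul_right hfJ _)
          exact le_rpow_mul_rpow hp hp₁ (hf.nonneg s hs x) (hfM s hs x hx)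
      _ = ENNReal.ofReal (K * J * (R ^ (n + 2))⁻¹ * M ^ ((1 - p) / p)) := by
          rw [← ENNReal.ofReal_mul (by positivity), ← ENNReal.ofReal_mul (by positivity)]
          congr 1
          ring
  calc f t x₀ ^ p ≤ (K * J * (R ^ (n + 2))⁻¹ * M ^ ((1 - p) / p)) ^ p :=
        Real.rpow_le_rpow (hf.nonneg t ht x₀) hle hp.le
    _ = (K * J * (R ^ (n + 2))⁻¹) ^ p * M ^ (1 - p) := by
        rw [Real.mul_rpow (by positivity) (by positivity), ← Real.rpow_mul hM,
          div_mul_cancel₀ _ hp.ne']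

theorem exists_rpow_le_of_cylinderLintegral_rpow_le (n : ℕ) {p : ℝ} (hp : 0 < p) (hp₁ : p ≤ 1) :
    ∃ K ≥ (0 : ℝ), ∀ {T : ℝ} {f : ℝ → 𝔼 n → ℝ}, IsHeatSubsolution T f → ∀ {t : ℝ}, t ∈ Ioo 0 T →
    ∀ (x₀ : 𝔼 n) {R J : ℝ}, 0 < R → 0 ≤ J →
    cylinderLintegral T x₀ R (fun s x => f s x ^ p) ≤ ENNReal.ofReal J →
    f t x₀ ^ p ≤ K * J * (R ^ (n + 2))⁻¹ := by
  obtain ⟨K, hK, hself⟩ := exists_rpow_le_mul_rpow n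
  refine ⟨(2 ^ (n + 2) : ℝ) ^ p⁻¹ * K, by positivity,
    fun {T f} hf {t} ht x₀ {R J} hR hJ hfJ => ?_⟩
  obtain ⟨S, htS, hST⟩ := exists_between ht.2
  have hfS := hf.mono hST.le
  obtain ⟨M, hM⟩ := hf.exists_forall_le hST x₀ R
  rw [mul_assoc _ K J]
  refine le_of_forall_ball_le_mul_rpow (g := fun (s : Ioo 0 S) x => f s x ^ p) (B := M ^ p)
    hR hp (mul_nonneg hK hJ) (fun s x => Real.rpow_nonneg (hfS.nonneg s s.2 x) p)
    (fun s x hx => Real.rpow_le_rpow (hfS.nonneg s s.2 x) (hM s s.2 x hx) hp.le) ?_ ⟨t, ht.1, htS⟩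
  exact fun x r N hr hN hball hfN s => hself hfS hp hp₁ s.2 x hr hN hJ
    (fun s' hs' => hfN ⟨s', hs'⟩) ((cylinderLintegral_mono hST.le hball _).trans hfJ)

end PowerMeanValue

section Growth

variable {n : ℕ} {T : ℝ} {f : ℝ → 𝔼 n → ℝ}

theorem rpow_min_one_le_one_add_rpow {y : ℝ} (hy : 0 ≤ y) (p : ℝ) :
    y ^ min p 1 ≤ 1 + y ^ p := by
  rcases le_total p 1 with hp | hp
  · rw [min_eq_left hp]
    exact le_add_of_nonneg_left zero_le_one
  · rw [min_eq_right hp, Real.rpow_one]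
    rcases le_total y 1 with hy₁ | hy₁
    · exact le_add_of_le_of_nonneg hy₁ (Real.rpow_nonneg hy p)
    · exact le_add_of_nonneg_of_le zero_le_one (Real.self_le_rpow_of_one_le hy₁ hp)

theorem IsHeatSubsolution.cylinderLintegral_rpow_min_one_le (hf : IsHeatSubsolution T f) (p : ℝ)
    (x₀ : 𝔼 n) (R : ℝ) : cylinderLintegral T x₀ R (fun t x => f t x ^ min p 1)
      ≤ ENNReal.ofReal (T * volume.real (ball x₀ R))
        + cylinderLintegral T x₀ R (fun t x => f t x ^ p) := by
  rw [← cylinderLintegral_one, cylinderLintegral, cylinderLintegral, cylinderLintegral,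
    ← lintegral_add_left measurable_const]
  refine setLIntegral_mono' measurableSet_Ioo fun t ht => ?_
  rw [← lintegral_add_left measurable_const]
  exact lintegral_mono fun x => (ENNReal.ofReal_le_ofReal
    (rpow_min_one_le_one_add_rpow (hf.nonneg t ht x) p)).trans ENNReal.ofReal_add_le

theorem IsHeatSubsolution.exists_le_exp (hf : IsHeatSubsolution T f) {p c : ℝ} (hp : 0 < p)
    (hc : 0 ≤ c) (hgrowth : ∀ r > 0, cylinderLintegral T 0 r (fun t x => f t x ^ p)
      ≤ ENNReal.ofReal (Real.exp (c * (1 + r ^ 2)))) :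
    ∃ A ≥ 0, ∃ b ≥ 0, ∀ t ∈ Ioo 0 T, ∀ x, f t x ≤ A * Real.exp (b * ‖x‖ ^ 2) := by
  have hq : 0 < min p 1 := lt_min hp one_pos
  obtain ⟨K, hK, hmean⟩ := exists_rpow_le_of_cylinderLintegral_rpow_le n hq (min_le_right p 1)
  set v := volume.real (ball (0 : 𝔼 n) 1)
  have : 0 ≤ v := measureReal_nonneg
  refine ⟨(K * (|T| * v + Real.exp (3 * c))) ^ (min p 1)⁻¹, by positivity,
    2 * c * (min p 1)⁻¹, by positivity, fun t ht x => ?_⟩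
  have hT : 0 < T := ht.1.trans ht.2
  have hJ : cylinderLintegral T x 1 (fun t x => f t x ^ min p 1)
      ≤ ENNReal.ofReal (T * v + Real.exp (c * (1 + (‖x‖ + 1) ^ 2))) := by
    have hvol : volume.real (ball x 1) = v := Measure.addHaar_real_ball_center volume x 1
    rw [ENNReal.ofReal_add (by positivity) (by positivity), ← hvol]
    refine (hf.cylinderLintegral_rpow_min_one_le p x 1).trans (add_le_add_right
      ((cylinderLintegral_mono le_rfl ?_ _).trans (hgrowth (‖x‖ + 1) (by positivity))) _)
    exact ball_subset_ball' (by rw [dist_zero_right, add_comm])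
  have hexp : Real.exp (c * (1 + (‖x‖ + 1) ^ 2))
      ≤ Real.exp (3 * c) * Real.exp (2 * c * ‖x‖ ^ 2) := by
    rw [← Real.exp_add]
    refine Real.exp_le_exp.2 ?_
    nlinarith [mul_nonneg hc (sq_nonneg (‖x‖ - 1))]
  have hpow : f t x ^ min p 1
      ≤ K * (|T| * v + Real.exp (3 * c)) * Real.exp (2 * c * ‖x‖ ^ 2) := by
    refine (hmean hf ht x one_pos (by positivity) hJ).trans ?_
    rw [one_pow, inv_one, mul_one, mul_assoc K, add_mul, abs_of_pos hT]
    refine mul_le_mul_of_nonneg_left (add_le_add ?_ hexp) hK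
    exact le_mul_of_one_le_right (by positivity) (Real.one_le_exp (by positivity))
  calc f t x ≤ (K * (|T| * v + Real.exp (3 * c)) * Real.exp (2 * c * ‖x‖ ^ 2)) ^ (min p 1)⁻¹ :=
        (Real.le_rpow_inv_iff_of_pos (hf.nonneg t ht x) (by positivity) hq).2 hpow
    _ = (K * (|T| * v + Real.exp (3 * c))) ^ (min p 1)⁻¹
          * Real.exp (2 * c * (min p 1)⁻¹ * ‖x‖ ^ 2) := by
        rw [Real.mul_rpow (by positivity) (by positivity), ← Real.exp_mul]
        ring_nf

end Growth

section InitialData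

variable {α ι : Type*} [MeasurableSpace α] {μ : Measure α}

theorem lintegral_ofReal_le_lintegral_ofReal_sq {u : α → ℝ} (hu : AEMeasurable u μ) :
    ∫⁻ x, ENNReal.ofReal (u x) ∂μ
      ≤ (∫⁻ x, ENNReal.ofReal (u x ^ 2) ∂μ) ^ (1 / 2 : ℝ) * μ univ ^ (1 / 2 : ℝ) := by
  have hsq : ∀ x, ENNReal.ofReal (u x) ^ (2 : ℝ) ≤ ENNReal.ofReal (u x ^ 2) := fun x => by
    rw [ENNReal.rpow_two]
    rcases le_total 0 (u x) with h | h
    · rw [ENNReal.ofReal_pow h]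
    · simp [ENNReal.ofReal_of_nonpos h]
  calc ∫⁻ x, ENNReal.ofReal (u x) ∂μ
      ≤ (∫⁻ x, ENNReal.ofReal (u x) ^ (2 : ℝ) ∂μ) ^ (1 / 2 : ℝ)
          * (∫⁻ _, 1 ^ (2 : ℝ) ∂μ) ^ (1 / 2 : ℝ) := by
        simpa only [Pi.mul_apply, mul_one] using ENNReal.lintegral_mul_le_Lp_mul_Lq μ
          Real.HolderConjugate.two_two hu.ennreal_ofReal (aemeasurable_const (b := 1))
    _ ≤ (∫⁻ x, ENNReal.ofReal (u x ^ 2) ∂μ) ^ (1 / 2 : ℝ) * μ univ ^ (1 / 2 : ℝ) := by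
        simp only [ENNReal.one_rpow, lintegral_one]
        gcongr
        exact hsq _

theorem tendsto_setLIntegral_ofReal_of_sq {s : Set α} (hs : μ s ≠ ⊤) {l : Filter ι} {u : ι → α → ℝ}
    (hu : ∀ᶠ i in l, AEMeasurable (u i) (μ.restrict s))
    (h : Tendsto (fun i => ∫⁻ x in s, ENNReal.ofReal (u i x ^ 2) ∂μ) l (nhds 0)) :
    Tendsto (fun i => ∫⁻ x in s, ENNReal.ofReal (u i x) ∂μ) l (nhds 0) := by
  have hlim := ENNReal.Tendsto.mul_const (h.ennrpow_const (1 / 2))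
    (Or.inr (ENNReal.rpow_ne_top_of_nonneg one_half_pos.le hs))
  rw [ENNReal.zero_rpow_of_pos one_half_pos, zero_mul] at hlim
  refine tendsto_of_tendsto_of_tendsto_of_le_of_le' tendsto_const_nhds hlim
    (Eventually.of_forall fun _ => zero_le) (hu.mono fun _ hi => ?_)
  simpa only [Measure.restrict_apply_univ] using lintegral_ofReal_le_lintegral_ofReal_sq hi

end InitialData

section Uniqueness

variable {n : ℕ} {T A b : ℝ} {f : ℝ → 𝔼 n → ℝ}

theorem IsHeatSubsolution.exists_le_mul_inv_sq (hf : IsHeatSubsolution T f) (hA : 0 ≤ A)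
    (hb : 0 ≤ b) (hle : ∀ t ∈ Ioo 0 T, ∀ x, f t x ≤ A * Real.exp (b * ‖x‖ ^ 2))
    (hbT : 256 * b * T ≤ 1) {t : ℝ} (ht : t ∈ Ioo 0 T) (x : 𝔼 n) :
    ∃ c, ∀ R > 0, f t x ≤ c * (R ^ 2)⁻¹ := by
  obtain ⟨K, hK, hmean⟩ := exists_ofReal_le_cylinderLintegral n
  set v := volume.real (ball (0 : 𝔼 n) 1)
  set a := A * Real.exp (2 * b * ‖x‖ ^ 2)
  refine ⟨K * a * T * v, fun R hR => ?_⟩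
  have hT : 0 < T := ht.1.trans ht.2
  have hball : ∀ s ∈ Ioo 0 T, ∀ y ∈ ball x R,
      f s y ≤ a * Real.exp (2 * b * R ^ 2) * 1 := fun s hs y hy => by
    have hy' : ‖y‖ ≤ ‖x‖ + R := by linarith [mem_ball_iff_norm.1 hy, norm_le_norm_add_norm_sub' y x]
    have hsq : ‖y‖ ^ 2 ≤ 2 * ‖x‖ ^ 2 + 2 * R ^ 2 := by
      nlinarith [norm_nonneg y, sq_nonneg (‖x‖ - R)]
    rw [mul_one, mul_assoc A, ← Real.exp_add]
    refine (hle s hs y).trans (mul_le_mul_of_nonneg_left (Real.exp_le_exp.2 ?_) hA)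
    nlinarith
  have hexp : Real.exp (-(R ^ 2 / (128 * T))) * Real.exp (2 * b * R ^ 2) ≤ 1 := by
    rw [← Real.exp_add, Real.exp_le_one_iff, neg_add_nonpos_iff, le_div_iff₀ (by positivity)]
    nlinarith [sq_nonneg R]
  rw [← ENNReal.ofReal_le_ofReal_iff (by positivity)]
  calc ENNReal.ofReal (f t x)
      ≤ ENNReal.ofReal (K * ((R ^ (n + 2))⁻¹ * Real.exp (-(R ^ 2 / (128 * T)))))
          * (ENNReal.ofReal (a * Real.exp (2 * b * R ^ 2))
            * cylinderLintegral T x R (fun _ _ => 1)) :=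
        (hmean hf ht x hR).trans
          (mul_le_mul_right (cylinderLintegral_le_const_mul (by positivity) hball) _)
    _ = ENNReal.ofReal (K * a * T * v * (R ^ 2)⁻¹
          * (Real.exp (-(R ^ 2 / (128 * T))) * Real.exp (2 * b * R ^ 2))) := by
        rw [cylinderLintegral_one, volume_real_ball_of_pos x hR,
          ← ENNReal.ofReal_mul (by positivity), ← ENNReal.ofReal_mul (by positivity), pow_add]
        congr 1
        field_simp
        rfl
    _ ≤ ENNReal.ofReal (K * a * T * v * (R ^ 2)⁻¹) :=
        ENNReal.ofReal_le_ofReal (mul_le_of_le_one_right (by positivity) hexp)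

theorem IsHeatSubsolution.eq_zero_of_le_exp_of_mul_le (hf : IsHeatSubsolution T f) (hA : 0 ≤ A)
    (hb : 0 ≤ b) (hle : ∀ t ∈ Ioo 0 T, ∀ x, f t x ≤ A * Real.exp (b * ‖x‖ ^ 2))
    (hbT : 256 * b * T ≤ 1) {t : ℝ} (ht : t ∈ Ioo 0 T) (x : 𝔼 n) : f t x = 0 := by
  obtain ⟨c, hc⟩ := hf.exists_le_mul_inv_sq hA hb hle hbT ht x
  have hlim : Tendsto (fun R : ℝ => c * (R ^ 2)⁻¹) atTop (nhds 0) := by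
    simpa only [mul_zero, Pi.inv_apply] using
      (tendsto_pow_atTop two_ne_zero).inv_tendsto_atTop.const_mul c
  exact le_antisymm (ge_of_tendsto hlim ((eventually_gt_atTop 0).mono hc)) (hf.nonneg t ht x)

theorem IsHeatSubsolution.shift (hf : IsHeatSubsolution T f) {s δ : ℝ} (hs : 0 ≤ s) (hsδ : s < δ)
    (hzero : ∀ t ∈ Ioo 0 δ, ∀ x, f t x = 0) : IsHeatSubsolution (T - s) fun t => f (s + t) := by
  have hmem : ∀ t ∈ Ioo 0 (T - s), s + t ∈ Ioo 0 T := fun t ht =>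
    ⟨add_pos_of_nonneg_of_pos hs ht.1, lt_sub_iff_add_lt'.1 ht.2⟩
  refine ⟨?_, fun t ht => hf.nonneg _ (hmem t ht), fun t ht x => ?_, fun R _ => ?_⟩
  · exact hf.contDiffOn.comp (f := fun q : ℝ × 𝔼 n => (s + q.1, q.2)) (by fun_prop)
      fun q hq => ⟨hmem q.1 hq.1, mem_univ _⟩
  · rw [deriv_comp_const_add (fun s => f s x)]
    exact hf.deriv_le _ (hmem t ht) x
  · refine tendsto_const_nhds.congr' ?_
    filter_upwards [Ioo_mem_nhdsGT (sub_pos.2 hsδ)] with t ht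
    simp [hzero (s + t) ⟨add_pos_of_nonneg_of_pos hs ht.1, lt_sub_iff_add_lt'.1 ht.2⟩]

theorem IsHeatSubsolution.eq_zero_of_le_exp_of_le_mul (hA : 0 ≤ A) (hb : 0 ≤ b) {h : ℝ}
    (hh : 0 < h) (hbh : 256 * b * (2 * h) ≤ 1) (k : ℕ) : ∀ {T : ℝ} {f : ℝ → 𝔼 n → ℝ},
    IsHeatSubsolution T f → (∀ t ∈ Ioo 0 T, ∀ x, f t x ≤ A * Real.exp (b * ‖x‖ ^ 2)) →
    T ≤ k * h → ∀ t ∈ Ioo 0 T, ∀ x, f t x = 0 := by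
  induction k with
  | zero =>
    intro T f _ _ hT t ht
    rw [Nat.cast_zero, zero_mul] at hT
    exact absurd (ht.1.trans ht.2) hT.not_gt
  | succ k ih =>
    intro T f hf hle hT t ht x
    have hshort : ∀ s ∈ Ioo 0 (min T (2 * h)), ∀ y, f s y = 0 := fun s hs y =>
      (hf.mono (min_le_left _ _)).eq_zero_of_le_exp_of_mul_le hA hb
        (fun r hr => hle r ⟨hr.1, hr.2.trans_le (min_le_left _ _)⟩)
        ((mul_le_mul_of_nonneg_left (min_le_right _ _) (by positivity)).trans hbh) hs y
    rcases le_or_gt t h with hth | hth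
    · exact hshort t ⟨ht.1, lt_min ht.2 (by linarith)⟩ x
    · have hshift := hf.shift hh.le (lt_min (hth.trans ht.2) (by linarith)) hshort
      have := ih hshift (fun s hs => hle (h + s) ⟨by linarith [hs.1], by linarith [hs.2]⟩)
        (by push_cast at hT; linarith) (t - h) ⟨by linarith, by linarith [ht.2]⟩ x
      rwa [add_sub_cancel] at this

theorem IsHeatSubsolution.eq_zero_of_le_exp (hf : IsHeatSubsolution T f) (hA : 0 ≤ A)
    (hb : 0 ≤ b) (hle : ∀ t ∈ Ioo 0 T, ∀ x, f t x ≤ A * Real.exp (b * ‖x‖ ^ 2)) :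
    ∀ t ∈ Ioo 0 T, ∀ x, f t x = 0 := by
  have hh : 0 < 1 / (512 * (b + 1)) := by positivity
  obtain ⟨k, hk⟩ := exists_nat_ge (T / (1 / (512 * (b + 1))))
  refine eq_zero_of_le_exp_of_le_mul hA hb hh ?_ k hf hle ((div_le_iff₀ hh).1 hk)
  field_simp
  linarith

theorem IsHeatSubsolution.eq_zero_of_cylinderLintegral_rpow_le {p C : ℝ}
    (hf : IsHeatSubsolution T f) (hp : 0 < p)
    (hgrowth : ∀ r > 0, cylinderLintegral T 0 r (fun t x => f t x ^ p) ^ (1 / p)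
      ≤ ENNReal.ofReal (Real.exp (C * (1 + r ^ 2)))) : ∀ t ∈ Ioo 0 T, ∀ x, f t x = 0 := by
  have hmass : ∀ r > 0, cylinderLintegral T 0 r (fun t x => f t x ^ p)
      ≤ ENNReal.ofReal (Real.exp (|C| * p * (1 + r ^ 2))) := fun r hr => by
    have hle := (ENNReal.rpow_inv_le_iff hp).1 (one_div p ▸ hgrowth r hr)
    rw [ENNReal.ofReal_rpow_of_pos (Real.exp_pos _), ← Real.exp_mul, mul_right_comm] at hle
    refine hle.trans ?_
    gcongr
    exact le_abs_self C
  obtain ⟨A, hA, b, hb, hle⟩ := hf.exists_le_exp hp (by positivity) hmass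
  exact hf.eq_zero_of_le_exp hA hb hle

theorem eq_zero_Ioc_of_eq_zero_Ioo {X : Type*} [TopologicalSpace X] {u : ℝ → X → ℝ} {a b : ℝ}
    (hab : a < b) (hu : ContinuousOn (Function.uncurry u) (Ioc a b ×ˢ univ))
    (h : ∀ t ∈ Ioo a b, ∀ x, u t x = 0) :
    ∀ t ∈ Ioc a b, ∀ x, u t x = 0 := by
  have heq : EqOn (Function.uncurry u) 0 (Ioc a b ×ˢ univ) :=
    EqOn.of_subset_closure (s := Ioo a b ×ˢ univ) (fun q hq => h q.1 hq.1 q.2) hu continuousOn_const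
      (prod_mono Ioo_subset_Ioc_self subset_rfl) (by
        rw [closure_prod_eq, closure_Ioo hab.ne, closure_univ]
        exact prod_mono Ioc_subset_Icc_self subset_rfl)
  exact fun t ht x => heq (x := (t, x)) ⟨ht, mem_univ x⟩

theorem heat_uniqueness_Lp_general {p C : ℝ} (hp : 0 < p)
    (hf_smooth : ContDiffOn ℝ 2 (Function.uncurry f) (Ioc 0 T ×ˢ univ))
    (hf_nonneg : ∀ t ∈ Ioc 0 T, ∀ x, 0 ≤ f t x)
    (hf_subsol : ∀ t ∈ Ioc 0 T, ∀ x, deriv (fun s => f s x) t ≤ heatLap (f t) x)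
    (hf_init : ∀ R > 0, Tendsto (fun t => ∫⁻ x in ball (0 : 𝔼 n) R, ENNReal.ofReal (f t x))
      (nhdsWithin 0 (Ioi 0)) (nhds 0))
    (hf_growth : ∀ r > 0,
      (∫⁻ t in Ioc 0 T, ∫⁻ x in ball (0 : 𝔼 n) r, ENNReal.ofReal (f t x ^ p)) ^ (1 / p)
        ≤ ENNReal.ofReal (Real.exp (C * (1 + r ^ 2)))) :
    ∀ t ∈ Ioc 0 T, ∀ x, f t x = 0 := by
  rcases le_or_gt T 0 with hT | hT
  · exact fun t ht => absurd (ht.1.trans_le ht.2) hT.not_gt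
  have hsub : Ioo 0 T ⊆ Ioc 0 T := Ioo_subset_Ioc_self
  have hf : IsHeatSubsolution T f :=
    ⟨hf_smooth.mono (prod_mono hsub subset_rfl), fun t ht => hf_nonneg t (hsub ht),
      fun t ht => hf_subsol t (hsub ht), hf_init⟩
  refine eq_zero_Ioc_of_eq_zero_Ioo hT hf_smooth.continuousOn <|
    hf.eq_zero_of_cylinderLintegral_rpow_le (C := C) hp fun r hr => ?_
  rw [cylinderLintegral, restrict_Ioo_eq_restrict_Ioc]
  exact hf_growth r hr

end Uniqueness
/-- **Theorem 2 (Euclidean case).** Let `0 < p ≤ 1`. A nonnegative smooth subsolution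
of the heat equation on `ℝⁿ × (0,1]` with zero initial data in `L²_loc` and
`‖f‖_{Lᵖ(B(0,r)×[0,1])} ≤ e^{C r}` for all `r > 0` vanishes identically. -/
theorem heat_uniqueness_Lp {n : ℕ} (p : ℝ) (hp0 : 0 < p) (hp1 : p ≤ 1)
    (f : ℝ → EuclideanSpace ℝ (Fin n) → ℝ)
    (hf_smooth : ContDiffOn ℝ (⊤ : ℕ∞)
      (fun q : ℝ × EuclideanSpace ℝ (Fin n) => f q.1 q.2) (Set.Ioc (0:ℝ) 1 ×ˢ Set.univ))
    (hf_nonneg : ∀ t ∈ Set.Ioc (0:ℝ) 1, ∀ x, 0 ≤ f t x)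
    (hf_subsol : ∀ t ∈ Set.Ioc (0:ℝ) 1, ∀ x, deriv (fun s => f s x) t ≤ heatLap (f t) x)
    (hf_init : ∀ R > (0:ℝ),
      Tendsto (fun t => ∫⁻ x in ball (0 : EuclideanSpace ℝ (Fin n)) R,
        ENNReal.ofReal ((f t x) ^ 2)) (nhdsWithin 0 (Set.Ioi 0)) (nhds 0))
    (C : ℝ)
    (hf_growth : ∀ r > (0:ℝ),
      (∫⁻ t in Set.Ioc (0:ℝ) 1, ∫⁻ x in ball (0 : EuclideanSpace ℝ (Fin n)) r,
        ENNReal.ofReal ((f t x) ^ p)) ^ (1 / p)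
      ≤ ENNReal.ofReal (Real.exp (C * r))) :
    ∀ t ∈ Set.Ioc (0:ℝ) 1, ∀ x, f t x = 0 := by
  refine heat_uniqueness_Lp_general (C := |C|) hp0 (hf_smooth.of_le (by norm_cast)) hf_nonneg
    hf_subsol (fun R hR => tendsto_setLIntegral_ofReal_of_sq measure_ball_lt_top.ne ?_
      (hf_init R hR)) fun r hr => (hf_growth r hr).trans ?_
  · filter_upwards [Ioc_mem_nhdsGT one_pos] with t ht
    exact (contDiff_of_contDiffOn_uncurry hf_smooth ht).continuous.measurable.aemeasurable
  · have hCr : C * r ≤ |C| * (1 + r ^ 2) :=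
      mul_le_mul (le_abs_self C) (by nlinarith) hr.le (abs_nonneg C)
    gcongr
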